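/- arXiv:1212.1682 — 4 statements merged into one kernel-verified Lean document; each statement's English description precedes it below -/
import Mathlib

section
/- There exists an integer k0 such that the following holds for every k >= k0 and every density r = 2^k * ln 2 - c with 0 < c <= 2. Let xi = k * 2^{-k/2}, and let Z'' = Z''(Phi) be the number of pairs (sigma, tau) of satisfying assignments of Phi = Phi_k(n, floor(r*n)) whose normalized Hamming distance dist(sigma,tau)/n lies in [k * 2^{-k}, 1] but outside [1/2 - xi, 1/2 + xi]. Then E[Z''] -> 0 as n -> infinity. -/
open Classical Finset Filter

noncomputable section

/-- A literal: a variable index together with a sign (`true` = positive occurrence). -/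
abbrev Lit (n : ℕ) := Fin n × Bool

/-- A clause: an ordered `k`-tuple of literals. -/
abbrev Clause (n k : ℕ) := Fin k → Lit n

/-- A `k`-CNF formula with `m` clauses over `n` variables. -/
abbrev Formula (n k m : ℕ) := Fin m → Clause n k

/-- A truth assignment. -/
abbrev Assignment (n : ℕ) := Fin n → Bool

/-- The truth value of a literal under an assignment. -/
def litVal {n : ℕ} (σ : Assignment n) (l : Lit n) : Bool :=
  if l.2 then σ l.1 else !(σ l.1)

/-- `σ` satisfies `Φ` if every clause contains at least one true literal. -/
def Satisfies {n k m : ℕ} (σ : Assignment n) (Φ : Formula n k m) : Prop :=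
  ∀ i : Fin m, ∃ j : Fin k, litVal σ (Φ i j) = true

/-- The set of satisfying assignments of `Φ`. -/
def satSet (n k m : ℕ) (Φ : Formula n k m) : Finset (Assignment n) :=
  univ.filter fun σ => Satisfies σ Φ

/-- The number of satisfying assignments of `Φ`. -/
def satCount (n k m : ℕ) (Φ : Formula n k m) : ℕ := (satSet n k m Φ).card

/-- Probability of an event under the uniformly random formula `Φ_k(n,m)`. -/
def prF (n k m : ℕ) (E : Formula n k m → Prop) : ℝ :=
  ((univ.filter fun Φ : Formula n k m => E Φ).card : ℝ) / (Fintype.card (Formula n k m) : ℝ)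

/-- Expectation of a function of the uniformly random formula `Φ_k(n,m)`. -/
def expF (n k m : ℕ) (f : Formula n k m → ℝ) : ℝ :=
  (∑ Φ : Formula n k m, f Φ) / (Fintype.card (Formula n k m) : ℝ)

/-- The number of occurrences of the literal `l` in `Φ`. -/
def occ (n k m : ℕ) (Φ : Formula n k m) (l : Lit n) : ℕ :=
  (univ.filter fun p : Fin m × Fin k => Φ p.1 p.2 = l).card

/-- The (signed) degree sequence of `Φ`. -/
def degSeq (n k m : ℕ) (Φ : Formula n k m) : Lit n → ℕ := occ n k m Φ

/-- Hamming distance between two assignments. -/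
def hdist {n : ℕ} (σ τ : Assignment n) : ℕ :=
  (univ.filter fun x => σ x ≠ τ x).card

/-- The majority-vote assignment: `x ↦ true` iff `x` occurs more often positively
than negatively. -/
def sigmaMaj (n k m : ℕ) (Φ : Formula n k m) : Assignment n :=
  fun x => decide (occ n k m Φ (x, false) < occ n k m Φ (x, true))

/-- `Z''(Φ)`: the number of pairs of satisfying assignments whose normalized Hamming
distance lies in `[k 2^{-k}, 1]` but outside `[1/2 - ξ, 1/2 + ξ]`, `ξ = k 2^{-k/2}`. -/
def Zpp (n k m : ℕ) (Φ : Formula n k m) : ℕ :=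
  (univ.filter fun p : Assignment n × Assignment n =>
    Satisfies p.1 Φ ∧ Satisfies p.2 Φ ∧
    (k : ℝ) * (2 : ℝ) ^ (-(k : ℝ)) ≤ (hdist p.1 p.2 : ℝ) / n ∧
    (hdist p.1 p.2 : ℝ) / n ≤ 1 ∧
    ¬(1 / 2 - (k : ℝ) * (2 : ℝ) ^ (-(k : ℝ) / 2) ≤ (hdist p.1 p.2 : ℝ) / n ∧
      (hdist p.1 p.2 : ℝ) / n ≤ 1 / 2 + (k : ℝ) * (2 : ℝ) ^ (-(k : ℝ) / 2))).card

/-!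
First moment. Two assignments at distance `d` falsify a random clause with probability `2 ^ (-k)`
each and both at once with probability `((1 - d / n) / 2) ^ k`, so with `a = d / n` and density `r`
the expected number of pairs of satisfying assignments at distance `d` is `exp (n * f a + o(n))`,
where `f a = log 2 + H(a) + r * log (1 - 2 ^ (-k) * (2 - (1 - a) ^ k))` and `H` is the binary
entropy. For `r` about `2 ^ k * log 2`, `f a < 0` amounts to `H(a) < log 2 * (1 - (1 - a) ^ k)`.
For `a ≤ 1 / k` this holds because `H(a) ≤ a * (1 - log a)` while `1 - (1 - a) ^ k` is of order
`k * a`; the lower cutoff `k * 2 ^ (-k)` keeps `-log a` below `k * log 2`. For larger `a`, Pinsker's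
inequality `H(a) ≤ log 2 - 2 * (a - 1 / 2) ^ 2` reduces it to `(1 - a) ^ k ≪ (a - 1 / 2) ^ 2`. Near
`1 / 2` the left side is of order `2 ^ (-k)`, so it is beaten by the width `ξ = k * 2 ^ (-k / 2)` of
the excluded window.
-/

section Entropy

lemma choose_le_exp_mul_binEntropy {n d : ℕ} (hd : d ≤ n) :
    (n.choose d : ℝ) ≤ Real.exp (n * Real.binEntropy (d / n)) := by
  rcases Nat.eq_zero_or_pos d with rfl | hd0
  · simp
  rcases hd.eq_or_lt with rfl | hdn
  · simp [hd0.ne']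
  have hn : 0 < n := hd0.trans hdn
  have hdn' : (0 : ℝ) < n - d := sub_pos.2 (by exact_mod_cast hdn)
  set p : ℝ := d / n with hp
  have hp1 : 1 - p = (n - d) / n := by rw [hp]; field_simp
  have hq0 : 0 < 1 - p := by rw [hp1]; positivity
  have hexp : Real.exp (n * Real.binEntropy p) = (p ^ d * (1 - p) ^ (n - d))⁻¹ := by
    rw [← Real.exp_log (inv_pos.2 (by positivity : 0 < p ^ d * (1 - p) ^ (n - d))),
      Real.log_inv, Real.log_mul (by positivity) (by positivity), Real.log_pow, Real.log_pow,
      Nat.cast_sub hd, Real.binEntropy, Real.log_inv, Real.log_inv, hp1, hp]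
    congr 1
    field_simp
    ring
  have hterm : p ^ d * (1 - p) ^ (n - d) * n.choose d ≤ (p + (1 - p)) ^ n := by
    rw [add_pow]
    exact single_le_sum (f := fun i => p ^ i * (1 - p) ^ (n - i) * (n.choose i : ℝ))
      (fun i _ => by positivity) (mem_range.2 (Nat.lt_succ_of_le hd))
  rw [add_sub_cancel, one_pow] at hterm
  rwa [hexp, ← one_div, le_div_iff₀ (by positivity), mul_comm]

lemma binEntropy_le_mul_one_sub_log {x p : ℝ} (hx : 0 < x) (hxp : x ≤ p) (hp : p ≤ 1) :
    Real.binEntropy p ≤ p * (1 - Real.log x) := by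
  calc Real.binEntropy p = Real.negMulLog p + Real.negMulLog (1 - p) :=
        Real.binEntropy_eq_negMulLog_add_negMulLog_one_sub p
    _ ≤ -p * Real.log p + (1 - (1 - p)) :=
        add_le_add le_rfl (Real.negMulLog_le_one_sub_self (sub_nonneg.2 hp))
    _ = p * (1 - Real.log p) := by ring
    _ ≤ p * (1 - Real.log x) := by
        have hp0 : 0 ≤ p := hx.le.trans hxp
        gcongr

lemma concaveOn_binEntropy_add_two_mul_sq :
    ConcaveOn ℝ (Set.Icc 0 1) fun p => Real.binEntropy p + 2 * (p - 1 / 2) ^ 2 := by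
  refine concaveOn_of_hasDerivWithinAt2_nonpos (convex_Icc 0 1) (by fun_prop)
    (f' := fun p => Real.log (1 - p) - Real.log p + 4 * (p - 1 / 2))
    (f'' := fun p => -1 / (1 - p) - 1 / p + 4) ?_ ?_ ?_ <;> rw [interior_Icc] <;>
    rintro p ⟨hp0, hp1⟩
  · have hsq := (((hasDerivAt_id p).sub_const (1 / 2)).pow 2).const_mul (2 : ℝ)
    refine (((Real.hasDerivAt_binEntropy hp0.ne' hp1.ne).add hsq).congr_deriv ?_).hasDerivWithinAt
    simp only [id_eq]
    ring
  · have hlog := ((hasDerivAt_id p).const_sub 1).log (sub_pos.2 hp1).ne'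
    have hlin := ((hasDerivAt_id p).sub_const (1 / 2)).const_mul (4 : ℝ)
    refine (((hlog.sub ((hasDerivAt_id p).log hp0.ne')).add hlin).congr_deriv ?_).hasDerivWithinAt
    simp only [id_eq, mul_one]
  · have hfour : 4 ≤ 1 / (p * (1 - p)) := by
      rw [le_div_iff₀ (mul_pos hp0 (sub_pos.2 hp1))]
      linarith [sq_nonneg (2 * p - 1)]
    have hq : 1 - p ≠ 0 := (sub_pos.2 hp1).ne'
    have hsum : -1 / (1 - p) - 1 / p = -(1 / (p * (1 - p))) := by field_simp; ring
    linarith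

/-- Pinsker's inequality for a Bernoulli variable against a fair coin. -/
lemma binEntropy_le_log_two_sub_sq {p : ℝ} (hp0 : 0 ≤ p) (hp1 : p ≤ 1) :
    Real.binEntropy p ≤ Real.log 2 - 2 * (p - 1 / 2) ^ 2 := by
  have hmid := concaveOn_binEntropy_add_two_mul_sq.2 ⟨hp0, hp1⟩
    (⟨sub_nonneg.2 hp1, sub_le_self 1 hp0⟩ : 1 - p ∈ Set.Icc (0 : ℝ) 1)
    (by norm_num : (0 : ℝ) ≤ 1 / 2) (by norm_num : (0 : ℝ) ≤ 1 / 2) (by norm_num)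
  have hcentre : 1 / 2 * p + 1 / 2 * (1 - p) = (2⁻¹ : ℝ) := by ring
  simp only [smul_eq_mul, hcentre, Real.binEntropy_one_sub, Real.binEntropy_two_inv] at hmid
  linarith

end Entropy

lemma one_sub_pow_le_exp_neg_mul {a : ℝ} (ha : a ≤ 1) (k : ℕ) :
    (1 - a) ^ k ≤ Real.exp (-(k * a)) := by
  rw [← mul_neg, Real.exp_nat_mul]
  exact pow_le_pow_left₀ (sub_nonneg.2 ha) (Real.one_sub_le_exp_neg a) k

lemma mul_div_one_add_mul_le_one_sub_one_sub_pow {a : ℝ} (ha0 : 0 ≤ a) (ha1 : a ≤ 1) (k : ℕ) :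
    k * a / (1 + k * a) ≤ 1 - (1 - a) ^ k := by
  have hden : 0 < 1 + k * a := by positivity
  have hprod : (1 - a) ^ k * (1 + k * a) ≤ 1 := by
    calc (1 - a) ^ k * (1 + k * a) ≤ (1 - a) ^ k * (1 + a) ^ k := by
          have hbernoulli : 1 + k * a ≤ (1 + a) ^ k := one_add_mul_le_pow (by linarith) k
          gcongr
      _ = (1 - a ^ 2) ^ k := by rw [← mul_pow]; ring
      _ ≤ 1 := pow_le_one₀ (by nlinarith) (by nlinarith)
  rw [div_le_iff₀ hden]
  linarith

/-- The inequality making the pairs at normalized distance `a` negligible: at density about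
`2 ^ k * log 2` their expected number grows at exponential rate
`binEntropy a - log 2 * (1 - (1 - a) ^ k)`. The slack `3 * k * 2 ^ (-k)` pays for a density up to
`k` below `2 ^ k * log 2` and still leaves exponential decay. -/
def HasEntropyGap (k : ℕ) (a : ℝ) : Prop :=
  Real.binEntropy a + 3 * (k * (1 / 2) ^ k) ≤ Real.log 2 * (1 - (1 - a) ^ k)

section EntropyGap

variable {k : ℕ} {a : ℝ}

lemma hasEntropyGap_of_le_one_div_sq (hk : 5 ≤ Real.log k) (ha : k * (1 / 2) ^ k ≤ a)
    (hak : a ≤ 1 / (k : ℝ) ^ 2) : HasEntropyGap k a := by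
  have hk1 : (1 : ℝ) ≤ k := by
    exact_mod_cast Nat.one_le_iff_ne_zero.2 (by rintro rfl; norm_num at hk)
  have hQ : 0 < k * (1 / 2 : ℝ) ^ k := by positivity
  have ha0 : 0 < a := hQ.trans_le ha
  have ha1 : a ≤ 1 := hak.trans (div_le_one_of_le₀ (one_le_pow₀ hk1) (by positivity))
  have hentropy : Real.binEntropy a ≤ a * (1 + k * Real.log 2 - Real.log k) := by
    refine (binEntropy_le_mul_one_sub_log hQ ha ha1).trans_eq ?_
    rw [Real.log_mul (by positivity) (by positivity), Real.log_pow, one_div, Real.log_inv]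
    ring
  have hsat : k * a - a ≤ 1 - (1 - a) ^ k := by
    have hk2a : a * k ^ 2 ≤ 1 := by rwa [le_div_iff₀ (by positivity)] at hak
    refine le_trans ?_ (mul_div_one_add_mul_le_one_sub_one_sub_pow ha0.le ha1 k)
    rw [le_div_iff₀ (by positivity)]
    nlinarith [mul_nonneg ha0.le (sub_nonneg.2 hk2a), show 0 ≤ k * a ^ 2 by positivity]
  unfold HasEntropyGap
  calc Real.binEntropy a + 3 * (k * (1 / 2) ^ k)
      ≤ a * (1 + k * Real.log 2 - Real.log k) + 3 * a := by gcongr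
    _ ≤ Real.log 2 * (k * a - a) := by nlinarith [Real.log_two_lt_d9]
    _ ≤ Real.log 2 * (1 - (1 - a) ^ k) := by gcongr

lemma hasEntropyGap_of_le_one_div (hk : 8 + 4 * Real.log k ≤ Real.log 2 * k)
    (ha : k * (1 / 2) ^ k ≤ a) (hka : 1 / (k : ℝ) ^ 2 ≤ a) (hak : a ≤ 1 / k) :
    HasEntropyGap k a := by
  have hk1 : (1 : ℝ) ≤ k := by
    exact_mod_cast Nat.one_le_iff_ne_zero.2 (by rintro rfl; norm_num at hk)
  have hk2 : 0 < 1 / (k : ℝ) ^ 2 := by positivity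
  have ha0 : 0 < a := hk2.trans_le hka
  have ha1 : a ≤ 1 := hak.trans (div_le_one_of_le₀ hk1 (by positivity))
  have hentropy : Real.binEntropy a ≤ a * (1 + 2 * Real.log k) := by
    refine (binEntropy_le_mul_one_sub_log hk2 hka ha1).trans_eq ?_
    rw [one_div, Real.log_inv, Real.log_pow]
    push_cast
    ring
  have hsat : k * a / 2 ≤ 1 - (1 - a) ^ k := by
    have hka1 : a * k ≤ 1 := by rwa [le_div_iff₀ (by positivity)] at hak
    refine le_trans ?_ (mul_div_one_add_mul_le_one_sub_one_sub_pow ha0.le ha1 k)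
    gcongr
    linarith
  unfold HasEntropyGap
  calc Real.binEntropy a + 3 * (k * (1 / 2) ^ k)
      ≤ a * (1 + 2 * Real.log k) + 3 * a := by gcongr
    _ ≤ Real.log 2 * (k * a / 2) := by nlinarith
    _ ≤ Real.log 2 * (1 - (1 - a) ^ k) := by gcongr

lemma hasEntropyGap_of_sq (ha0 : 0 ≤ a) (ha1 : a ≤ 1)
    (h : Real.log 2 * (1 - a) ^ k + 3 * (k * (1 / 2) ^ k) ≤ 2 * (a - 1 / 2) ^ 2) :
    HasEntropyGap k a := by
  unfold HasEntropyGap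
  linarith [binEntropy_le_log_two_sub_sq ha0 ha1]

lemma hasEntropyGap_of_le_one_div_eight (hk : 300 * (k * (1 / 2 : ℝ) ^ k) ≤ 1) (hk0 : 0 < k)
    (hka : 1 / (k : ℝ) ≤ a) (ha : a ≤ 1 / 8) : HasEntropyGap k a := by
  have hka1 : 1 ≤ k * a := by rwa [div_le_iff₀' (by positivity)] at hka
  have ha0 : 0 ≤ a := hka.trans' (by positivity)
  have hy : (1 - a) ^ k ≤ 0.37 := by
    calc (1 - a) ^ k ≤ Real.exp (-(k * a)) := one_sub_pow_le_exp_neg_mul (by linarith) k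
      _ ≤ Real.exp (-1) := by gcongr
      _ ≤ 0.37 := by linarith [Real.exp_neg_one_lt_d9]
  refine hasEntropyGap_of_sq ha0 (by linarith) ?_
  calc Real.log 2 * (1 - a) ^ k + 3 * (k * (1 / 2) ^ k)
      ≤ 0.7 * 0.37 + 3 * (1 / 300) := by
        have hlog : Real.log 2 ≤ 0.7 := by linarith [Real.log_two_lt_d9]
        have := pow_nonneg (by linarith : 0 ≤ 1 - a) k
        gcongr
        linarith
    _ ≤ 2 * (a - 1 / 2) ^ 2 := by nlinarith

lemma hasEntropyGap_of_le_half_sub (hk : 8 * (k ^ 3 * (7 / 8 : ℝ) ^ k) ≤ 1) (hk0 : 0 < k)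
    (ha : 1 / 8 ≤ a) (hak : a ≤ 1 / 2 - 1 / (2 * k)) : HasEntropyGap k a := by
  have hk1 : (1 : ℝ) ≤ k := by exact_mod_cast hk0
  have hhalf : 1 / (2 * (k : ℝ)) ≤ 1 / 2 - a := by linarith
  have ha1 : a ≤ 1 := by linarith [show 0 ≤ 1 / (2 * (k : ℝ)) by positivity]
  refine hasEntropyGap_of_sq (by linarith) ha1 ?_
  calc Real.log 2 * (1 - a) ^ k + 3 * (k * (1 / 2) ^ k)
      ≤ k * (7 / 8) ^ k + 3 * (k * (7 / 8) ^ k) := by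
        have hlog : Real.log 2 ≤ k := by linarith [Real.log_two_lt_d9]
        have := pow_nonneg (sub_nonneg.2 ha1) k
        have hbase : (1 / 2 : ℝ) ≤ 7 / 8 := by norm_num
        gcongr ?_ * ?_ ^ _ + _ * (_ * ?_ ^ _)
        linarith
    _ = 4 * (k * (7 / 8) ^ k) := by ring
    _ ≤ 2 * (1 / (2 * k)) ^ 2 := by
        rw [show 2 * (1 / (2 * (k : ℝ))) ^ 2 = 1 / (2 * k ^ 2) by field_simp,
          le_div_iff₀ (by positivity)]
        linarith
    _ ≤ 2 * (1 / 2 - a) ^ 2 := by gcongr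
    _ = 2 * (a - 1 / 2) ^ 2 := by ring

lemma hasEntropyGap_of_half_sub_le (hk : 3 ≤ k) (hka : 1 / 2 - 1 / (2 * k) ≤ a) (ha1 : a ≤ 1)
    (hdev : k ^ 2 * (1 / 2) ^ k ≤ (a - 1 / 2) ^ 2) : HasEntropyGap k a := by
  have hk3 : (3 : ℝ) ≤ k := by exact_mod_cast hk
  have ha0 : 0 ≤ a := hka.trans' (by rw [sub_nonneg]; gcongr; linarith)
  have hy : (1 - a) ^ k ≤ 3 * (1 / 2) ^ k := by
    calc (1 - a) ^ k ≤ (Real.exp (1 / k) * (1 / 2)) ^ k := by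
          have hsub : 1 - a ≤ (1 / k + 1) * (1 / 2) := by
            have : 1 / (2 * (k : ℝ)) = 1 / k * (1 / 2) := by field_simp
            linarith
          refine pow_le_pow_left₀ (sub_nonneg.2 ha1) (hsub.trans ?_) k
          gcongr
          exact Real.add_one_le_exp _
      _ = Real.exp 1 * (1 / 2) ^ k := by
          rw [mul_pow, ← Real.exp_nat_mul, mul_one_div_cancel (by positivity)]
      _ ≤ 3 * (1 / 2) ^ k := by
          gcongr
          linarith [Real.exp_one_lt_d9]
  refine hasEntropyGap_of_sq ha0 ha1 ?_
  calc Real.log 2 * (1 - a) ^ k + 3 * (k * (1 / 2) ^ k)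
      ≤ 1 * (3 * (1 / 2) ^ k) + 3 * (k * (1 / 2) ^ k) := by
        have hlog : Real.log 2 ≤ 1 := by linarith [Real.log_two_lt_d9]
        have := pow_nonneg (sub_nonneg.2 ha1) k
        gcongr
    _ = 3 * (1 + k) * (1 / 2) ^ k := by ring
    _ ≤ 2 * k ^ 2 * (1 / 2) ^ k := by
        gcongr ?_ * _
        nlinarith
    _ ≤ 2 * (a - 1 / 2) ^ 2 := by linarith

end EntropyGap

/-- The normalized distances of the pairs counted by `Zpp`. -/
def atypicalDistances (k : ℕ) : Set ℝ :=
  Set.Icc (k * 2 ^ (-(k : ℝ))) 1 \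
    Set.Icc (1 / 2 - k * 2 ^ (-(k : ℝ) / 2)) (1 / 2 + k * 2 ^ (-(k : ℝ) / 2))

lemma mem_atypicalDistances_iff {k : ℕ} {a : ℝ} :
    a ∈ atypicalDistances k ↔
      k * (1 / 2) ^ k ≤ a ∧ a ≤ 1 ∧ k ^ 2 * (1 / 2) ^ k < (a - 1 / 2) ^ 2 := by
  have hrpow : (2 : ℝ) ^ (-(k : ℝ)) = (1 / 2) ^ k := by
    rw [Real.rpow_neg zero_le_two, Real.rpow_natCast, one_div, inv_pow]
  have hsq : (k * (2 : ℝ) ^ (-(k : ℝ) / 2)) ^ 2 = k ^ 2 * (1 / 2) ^ k := by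
    rw [mul_pow, ← Real.rpow_mul_natCast zero_le_two, Nat.cast_ofNat, div_mul_cancel₀ _ two_ne_zero,
      hrpow]
  rw [atypicalDistances, Set.mem_sdiff, ← Real.closedBall_eq_Icc, Metric.mem_closedBall, not_le,
    Real.dist_eq, Set.mem_Icc, hrpow, and_assoc, ← sq_abs (a - 1 / 2), ← hsq,
    sq_lt_sq₀ (by positivity) (abs_nonneg _)]

lemma eventually_hasEntropyGap_of_mem_atypicalDistances :
    ∀ᶠ k : ℕ in atTop, ∀ a ∈ atypicalDistances k, HasEntropyGap k a := by
  have hlog : ∀ᶠ k : ℕ in atTop, 5 ≤ Real.log k :=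
    (Real.tendsto_log_atTop.comp tendsto_natCast_atTop_atTop).eventually_ge_atTop 5
  have hlin : ∀ᶠ k : ℕ in atTop, 8 + 4 * Real.log k ≤ Real.log 2 * k := by
    have hbound := (Real.isLittleO_log_id_atTop.comp_tendsto tendsto_natCast_atTop_atTop).bound
      (show (0 : ℝ) < 1 / 10 by norm_num)
    filter_upwards [hbound, eventually_ge_atTop 30] with k hk hk30
    have hk30' : (30 : ℝ) ≤ k := by exact_mod_cast hk30
    have hle := (Real.le_norm_self _).trans hk
    simp only [Function.comp_apply, id_eq, Real.norm_natCast] at hle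
    linarith [mul_le_mul_of_nonneg_right Real.log_two_gt_d9.le k.cast_nonneg]
  have hpow2 : ∀ᶠ k : ℕ in atTop, 300 * (k * (1 / 2 : ℝ) ^ k) ≤ 1 := by
    have hlim : Tendsto (fun k : ℕ => k * (1 / 2 : ℝ) ^ k) atTop (nhds 0) :=
      tendsto_self_mul_const_pow_of_lt_one (by norm_num) (by norm_num)
    exact (hlim.const_mul 300).eventually_le_const (by norm_num)
  have hpow78 : ∀ᶠ k : ℕ in atTop, 8 * (k ^ 3 * (7 / 8 : ℝ) ^ k) ≤ 1 := by
    have hlim : Tendsto (fun k : ℕ => (k : ℝ) ^ 3 * (7 / 8 : ℝ) ^ k) atTop (nhds 0) :=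
      tendsto_pow_const_mul_const_pow_of_lt_one 3 (by norm_num) (by norm_num)
    exact (hlim.const_mul 8).eventually_le_const (by norm_num)
  filter_upwards [hlog, hlin, hpow2, hpow78, eventually_ge_atTop 3]
    with k hlog hlin hpow2 hpow78 hk a ha
  obtain ⟨hQa, ha1, hdev⟩ := mem_atypicalDistances_iff.1 ha
  have hk0 : 0 < k := by omega
  rcases le_total a (1 / (k : ℝ) ^ 2) with h₁ | h₁
  · exact hasEntropyGap_of_le_one_div_sq hlog hQa h₁
  rcases le_total a (1 / k) with h₂ | h₂
  · exact hasEntropyGap_of_le_one_div hlin hQa h₁ h₂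
  rcases le_total a (1 / 8) with h₃ | h₃
  · exact hasEntropyGap_of_le_one_div_eight hpow2 hk0 h₂ h₃
  rcases le_total a (1 / 2 - 1 / (2 * k)) with h₄ | h₄
  · exact hasEntropyGap_of_le_half_sub hpow78 hk0 h₃ h₄
  · exact hasEntropyGap_of_half_sub_le hk h₄ ha1 hdev.le

lemma card_filter_forall_apply {ι α : Type*} [Fintype ι] [DecidableEq ι] [Fintype α] (p : α → Prop)
    [DecidablePred p] [DecidablePred fun f : ι → α => ∀ i, p (f i)] :
    #{f : ι → α | ∀ i, p (f i)} = #{x | p x} ^ Fintype.card ι := by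
  rw [← card_univ, ← prod_const, ← Fintype.card_piFinset]
  congr 1
  ext f
  simp only [mem_filter, mem_univ, true_and, Fintype.mem_piFinset]

section Counting

variable {n k m : ℕ}

lemma hdist_eq_hammingDist (σ τ : Assignment n) : hdist σ τ = hammingDist σ τ := by
  unfold hdist hammingDist
  congr!

lemma hdist_le (σ τ : Assignment n) : hdist σ τ ≤ n := by
  simpa [hdist_eq_hammingDist] using hammingDist_le_card_fintype (x := σ) (y := τ)

lemma sum_apply_hdist {M : Type*} [AddCommMonoid M] (σ : Assignment n) (g : ℕ → M) :
    ∑ τ, g (hdist σ τ) = ∑ d ∈ range (n + 1), n.choose d • g d := by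
  let disagreement (τ : Assignment n) : Finset (Fin n) := {x | σ x ≠ τ x}
  let flip (s : Finset (Fin n)) : Assignment n := fun x => if x ∈ s then !σ x else σ x
  have hflip : ∀ τ, flip (disagreement τ) = τ := fun τ => by
    ext x
    by_cases h : σ x = τ x
    · simp [flip, disagreement, h]
    · simp [flip, disagreement, Bool.eq_not_of_ne (Ne.symm h)]
  have hdisagreement : ∀ s, disagreement (flip s) = s := fun s => by
    ext x
    by_cases h : x ∈ s <;> simp [flip, disagreement, h]
  calc ∑ τ, g (hdist σ τ) = ∑ s : Finset (Fin n), g #s :=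
        Fintype.sum_equiv ⟨disagreement, flip, hflip, hdisagreement⟩ _ _ fun _ => rfl
    _ = ∑ d ∈ range (n + 1), n.choose d • g d := by
        simpa using sum_powerset_apply_card g (x := (univ : Finset (Fin n)))

lemma litVal_eq_false_iff {σ : Assignment n} {l : Lit n} : litVal σ l = false ↔ l.2 = !σ l.1 := by
  cases h : l.2 <;> simp [litVal, h]

lemma card_filter_litVal_eq_false (σ τ : Assignment n) :
    #{l : Lit n | litVal σ l = false ∧ litVal τ l = false} = n - hdist σ τ := by
  have hagree : #{x | σ x = τ x} = n - hdist σ τ := by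
    have := card_filter_add_card_filter_not (s := univ) fun x => σ x = τ x
    rw [card_univ, Fintype.card_fin] at this
    exact Nat.eq_sub_of_add_eq this
  rw [← hagree]
  refine card_nbij' Prod.fst (fun x => (x, !σ x)) ?_ ?_ ?_ ?_
  all_goals simp +contextual [litVal_eq_false_iff, Set.MapsTo, Set.LeftInvOn]

/-- The event that `σ` satisfies the single clause `C`; `Satisfies σ Φ` is its conjunction over the
clauses of `Φ`. -/
def SatisfiesClause (σ : Assignment n) (C : Clause n k) : Prop :=
  ∃ j, litVal σ (C j) = true

lemma card_filter_not_satisfiesClause (σ τ : Assignment n) :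
    #{C : Clause n k | ¬SatisfiesClause σ C ∧ ¬SatisfiesClause τ C} = (n - hdist σ τ) ^ k := by
  have := card_filter_forall_apply (ι := Fin k) fun l => litVal σ l = false ∧ litVal τ l = false
  simpa [SatisfiesClause, forall_and, card_filter_litVal_eq_false] using this

lemma card_filter_satisfiesClause_and (σ τ : Assignment n) :
    #{C : Clause n k | SatisfiesClause σ C ∧ SatisfiesClause τ C} + 2 * n ^ k =
      (2 * n) ^ k + (n - hdist σ τ) ^ k := by
  have hσ := card_filter_not_satisfiesClause (k := k) σ σ
  have hτ := card_filter_not_satisfiesClause (k := k) τ τ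
  simp only [and_self, hdist_eq_hammingDist, hammingDist_self, tsub_zero] at hσ hτ
  have hunion := card_union_add_card_inter {C : Clause n k | ¬SatisfiesClause σ C}
    {C : Clause n k | ¬SatisfiesClause τ C}
  rw [← filter_or, ← filter_and, card_filter_not_satisfiesClause, hσ, hτ] at hunion
  have hcompl := card_filter_add_card_filter_not (s := (univ : Finset (Clause n k)))
    fun C => SatisfiesClause σ C ∧ SatisfiesClause τ C
  simp only [not_and_or, card_univ, Fintype.card_fun, Fintype.card_prod, Fintype.card_fin,
    Fintype.card_bool, mul_comm n 2] at hcompl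
  omega

/-- The probability that a uniformly random clause is satisfied by both of two assignments at
normalized distance `a`, by inclusion-exclusion. -/
def pairSatProb (k : ℕ) (a : ℝ) : ℝ :=
  1 - 2 * (1 / 2) ^ k + ((1 - a) / 2) ^ k

lemma card_filter_satisfiesClause_and_div_card (hn : 0 < n) (σ τ : Assignment n) :
    (#{C : Clause n k | SatisfiesClause σ C ∧ SatisfiesClause τ C} : ℝ) /
      Fintype.card (Clause n k) = pairSatProb k (hdist σ τ / n) := by
  have hcount : (#{C : Clause n k | SatisfiesClause σ C ∧ SatisfiesClause τ C} : ℝ) + 2 * n ^ k =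
      (2 * n) ^ k + (n - hdist σ τ) ^ k := by
    rw [← Nat.cast_sub (hdist_le σ τ)]
    exact_mod_cast card_filter_satisfiesClause_and σ τ
  have hagree : (1 - (hdist σ τ : ℝ) / n) / 2 = (n - hdist σ τ) / (2 * n) := by field_simp
  have hhalf : (1 / 2 : ℝ) = n / (2 * n) := by field_simp
  rw [eq_sub_of_add_eq hcount, pairSatProb, hagree, hhalf, div_pow, div_pow]
  simp only [Fintype.card_fun, Fintype.card_prod, Fintype.card_fin, Fintype.card_bool,
    mul_comm n 2, Nat.cast_pow, Nat.cast_mul, Nat.cast_ofNat]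
  field_simp
  ring

lemma prF_forall (P : Clause n k → Prop) [DecidablePred P] :
    prF n k m (fun Φ => ∀ i, P (Φ i)) = ((#{C | P C} : ℝ) / Fintype.card (Clause n k)) ^ m := by
  rw [prF, card_filter_forall_apply, Fintype.card_fun, Fintype.card_fin]
  push_cast
  rw [div_pow]

lemma prF_satisfies_and (hn : 0 < n) (σ τ : Assignment n) :
    prF n k m (fun Φ => Satisfies σ Φ ∧ Satisfies τ Φ) = pairSatProb k (hdist σ τ / n) ^ m := by
  rw [← card_filter_satisfiesClause_and_div_card hn, ← prF_forall]
  simp only [Satisfies, SatisfiesClause, forall_and]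

lemma expF_card_filter {ι : Type*} [Fintype ι] (E : ι → Formula n k m → Prop)
    [∀ Φ, DecidablePred fun i => E i Φ] :
    expF n k m (fun Φ => (#{i | E i Φ} : ℝ)) = ∑ i, prF n k m (E i) := by
  simp only [expF, prF, card_filter, Nat.cast_sum, ← sum_div]
  rw [sum_comm]
  congr!

lemma expF_nonneg {f : Formula n k m → ℝ} (hf : ∀ Φ, 0 ≤ f Φ) : 0 ≤ expF n k m f :=
  div_nonneg (sum_nonneg fun Φ _ => hf Φ) (Nat.cast_nonneg _)

lemma prF_const_and (P : Prop) (E : Formula n k m → Prop) :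
    prF n k m (fun Φ => P ∧ E Φ) = if P then prF n k m E else 0 := by
  by_cases h : P <;> simp [h, prF]

lemma expF_Zpp (hn : 0 < n) :
    expF n k m (fun Φ => (Zpp n k m Φ : ℝ)) =
      2 ^ n * ∑ d ∈ range (n + 1) with ((d : ℕ) / n : ℝ) ∈ atypicalDistances k,
        (n.choose d : ℝ) * pairSatProb k (d / n) ^ m := by
  have hZ : ∀ Φ : Formula n k m, Zpp n k m Φ = #{p : Assignment n × Assignment n |
      (hdist p.1 p.2 / n : ℝ) ∈ atypicalDistances k ∧ Satisfies p.1 Φ ∧ Satisfies p.2 Φ} := by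
    intro Φ
    unfold Zpp
    congr! 2 with p
    simp only [atypicalDistances, Set.mem_sdiff, Set.mem_Icc]
    tauto
  simp only [hZ, expF_card_filter, prF_const_and, prF_satisfies_and hn, Fintype.sum_prod_type]
  simp only [sum_apply_hdist _ fun d : ℕ => if (d / n : ℝ) ∈ atypicalDistances k then
    pairSatProb k (d / n) ^ m else 0]
  simp [sum_filter]

end Counting

lemma one_sub_pow_floor_le_exp {x : ℝ} (hx0 : 0 ≤ x) (hx1 : x ≤ 1) (t : ℝ) :
    (1 - x) ^ ⌊t⌋₊ ≤ Real.exp (1 - x * t) := by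
  refine (one_sub_pow_le_exp_neg_mul hx1 _).trans (Real.exp_le_exp.2 ?_)
  linarith [mul_le_mul_of_nonneg_left (Nat.lt_floor_add_one t).le hx0]

section FirstMoment

variable {k n d : ℕ} {a r : ℝ}

lemma pairSatProb_eq_one_sub : pairSatProb k a = 1 - (1 / 2) ^ k * (2 - (1 - a) ^ k) := by
  rw [pairSatProb, div_pow, div_pow]
  ring

lemma pairSatProb_pow_floor_mem_Icc (hk : 0 < k) (ha0 : 0 ≤ a) (ha1 : a ≤ 1) (t : ℝ) :
    pairSatProb k a ^ ⌊t⌋₊ ∈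
      Set.Icc 0 (Real.exp (1 - (1 / 2) ^ k * (2 - (1 - a) ^ k) * t)) := by
  have hy0 : 0 ≤ (1 - a) ^ k := pow_nonneg (sub_nonneg.2 ha1) k
  have hy1 : (1 - a) ^ k ≤ 1 := pow_le_one₀ (sub_nonneg.2 ha1) (sub_le_self 1 ha0)
  have hQ : (1 / 2 : ℝ) ^ k ≤ 1 / 2 :=
    pow_le_of_le_one (by norm_num) (by norm_num) hk.ne'
  have hx0 : 0 ≤ (1 / 2 : ℝ) ^ k * (2 - (1 - a) ^ k) := mul_nonneg (by positivity) (by linarith)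
  have hx1 : (1 / 2 : ℝ) ^ k * (2 - (1 - a) ^ k) ≤ 1 := by
    calc (1 / 2 : ℝ) ^ k * (2 - (1 - a) ^ k) ≤ 1 / 2 * 2 := by gcongr <;> linarith
      _ = 1 := by norm_num
  rw [pairSatProb_eq_one_sub]
  exact ⟨pow_nonneg (sub_nonneg.2 hx1) _, one_sub_pow_floor_le_exp hx0 hx1 t⟩

lemma HasEntropyGap.growthRate_le (hgap : HasEntropyGap k a) (ha0 : 0 ≤ a) (ha1 : a ≤ 1)
    (hr : 2 ^ k * Real.log 2 - k ≤ r) :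
    Real.log 2 + Real.binEntropy a - (1 / 2) ^ k * (2 - (1 - a) ^ k) * r ≤
      -(k * (1 / 2) ^ k) := by
  have hy0 : 0 ≤ (1 - a) ^ k := pow_nonneg (sub_nonneg.2 ha1) k
  have hy1 : (1 - a) ^ k ≤ 1 := pow_le_one₀ (sub_nonneg.2 ha1) (sub_le_self 1 ha0)
  have hQr : Real.log 2 - k * (1 / 2) ^ k ≤ (1 / 2) ^ k * r := by
    have hinv : (1 / 2 : ℝ) ^ k * 2 ^ k = 1 := by rw [← mul_pow]; norm_num
    linear_combination (1 / 2) ^ k * hr - Real.log 2 * hinv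
  have hloss : k * (1 / 2) ^ k * (2 - (1 - a) ^ k) ≤ k * (1 / 2) ^ k * 2 := by
    gcongr
    linarith
  have hrate := mul_le_mul_of_nonneg_left hQr (by linarith : 0 ≤ 2 - (1 - a) ^ k)
  unfold HasEntropyGap at hgap
  linarith

lemma HasEntropyGap.two_pow_mul_choose_mul_le (hgap : HasEntropyGap k (d / n)) (hk : 0 < k)
    (hn : 0 < n) (hd : d ≤ n) (hr : 2 ^ k * Real.log 2 - k ≤ r) :
    2 ^ n * (n.choose d * pairSatProb k (d / n) ^ ⌊r * n⌋₊) ≤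
      Real.exp 1 * Real.exp (-(k * (1 / 2) ^ k)) ^ n := by
  have ha0 : 0 ≤ (d / n : ℝ) := by positivity
  have ha1 : (d / n : ℝ) ≤ 1 := div_le_one_of_le₀ (by exact_mod_cast hd) n.cast_nonneg
  have hprob := pairSatProb_pow_floor_mem_Icc hk ha0 ha1 (r * n)
  have hrate := hgap.growthRate_le ha0 ha1 hr
  have htwo : (2 : ℝ) ^ n = Real.exp (n * Real.log 2) := by
    rw [Real.exp_nat_mul, Real.exp_log two_pos]
  set a : ℝ := d / n
  calc 2 ^ n * (n.choose d * pairSatProb k a ^ ⌊r * n⌋₊)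
      ≤ Real.exp (n * Real.log 2) * (Real.exp (n * Real.binEntropy a) *
          Real.exp (1 - (1 / 2) ^ k * (2 - (1 - a) ^ k) * (r * n))) := by
        rw [htwo]
        gcongr
        · exact hprob.1
        · exact choose_le_exp_mul_binEntropy hd
        · exact hprob.2
    _ = Real.exp (1 + n * (Real.log 2 + Real.binEntropy a -
          (1 / 2) ^ k * (2 - (1 - a) ^ k) * r)) := by
        rw [← Real.exp_add, ← Real.exp_add]
        ring_nf
    _ ≤ Real.exp (1 + n * -(k * (1 / 2) ^ k)) := by gcongr
    _ = Real.exp 1 * Real.exp (-(k * (1 / 2) ^ k)) ^ n := by rw [Real.exp_add, Real.exp_nat_mul]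

lemma expF_Zpp_le (hgap : ∀ a ∈ atypicalDistances k, HasEntropyGap k a) (hk : 0 < k) (hn : 0 < n)
    (hr : 2 ^ k * Real.log 2 - k ≤ r) :
    expF n k ⌊r * n⌋₊ (fun Φ => (Zpp n k ⌊r * n⌋₊ Φ : ℝ)) ≤
      (n + 1) * (Real.exp 1 * Real.exp (-(k * (1 / 2) ^ k)) ^ n) := by
  rw [expF_Zpp hn, mul_sum]
  refine (sum_le_card_nsmul _ _ (Real.exp 1 * Real.exp (-(k * (1 / 2) ^ k)) ^ n)
    fun d hd => ?_).trans ?_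
  · obtain ⟨hdn, hfar⟩ := mem_filter.1 hd
    exact (hgap _ hfar).two_pow_mul_choose_mul_le hk hn (mem_range_succ_iff.1 hdn) hr
  · rw [nsmul_eq_mul]
    gcongr
    exact_mod_cast (card_filter_le _ _).trans_eq (card_range (n + 1))

end FirstMoment

lemma tendsto_add_one_mul_const_mul_pow {q : ℝ} (hq0 : 0 ≤ q) (hq1 : q < 1) (C : ℝ) :
    Tendsto (fun n : ℕ => ((n : ℝ) + 1) * (C * q ^ n)) atTop (nhds 0) := by
  have hlim := ((tendsto_self_mul_const_pow_of_lt_one hq0 hq1).add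
    (tendsto_pow_atTop_nhds_zero_of_lt_one hq0 hq1)).const_mul C
  rw [add_zero, mul_zero] at hlim
  exact hlim.congr fun n => by ring

theorem statement7_general :
    ∃ k0 : ℕ, ∀ k : ℕ, k0 ≤ k → ∀ r : ℝ, 2 ^ k * Real.log 2 - k ≤ r →
      Tendsto (fun n : ℕ => expF n k ⌊r * n⌋₊ fun Φ => (Zpp n k ⌊r * n⌋₊ Φ : ℝ))
        atTop (nhds 0) := by
  obtain ⟨k0, hk0⟩ := eventually_atTop.1
    (eventually_hasEntropyGap_of_mem_atypicalDistances.and (eventually_gt_atTop 0))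
  refine ⟨k0, fun k hk r hr => ?_⟩
  obtain ⟨hgap, hkpos⟩ := hk0 k hk
  have hq : Real.exp (-(k * (1 / 2) ^ k)) < 1 :=
    Real.exp_lt_one_iff.2 (neg_neg_of_pos (by positivity))
  refine squeeze_zero' (.of_forall fun n => expF_nonneg fun Φ => Nat.cast_nonneg _) ?_
    (tendsto_add_one_mul_const_mul_pow (Real.exp_nonneg _) hq (Real.exp 1))
  filter_upwards [eventually_gt_atTop 0] with n hn
  exact expF_Zpp_le hgap hkpos hn hr

/-- For `k ≥ k0` and `r = 2^k ln 2 - c` with `0 < c ≤ 2`,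
`E[Z''] → 0` as `n → ∞`. -/
theorem statement7 :
    ∃ k0 : ℕ, ∀ k : ℕ, k0 ≤ k → ∀ c : ℝ, 0 < c → c ≤ 2 →
      Tendsto
        (fun n : ℕ =>
          let m := ⌊(2 ^ k * Real.log 2 - c) * (n : ℝ)⌋₊
          expF n k m fun Φ => (Zpp n k m Φ : ℝ))
        atTop (nhds 0) := by
  obtain ⟨k0, h⟩ := statement7_general
  exact ⟨max k0 2, fun k hk c _ hc => h k (le_of_max_le_left hk) _
    (sub_le_sub_left (hc.trans (mod_cast le_of_max_le_right hk)) _)⟩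
end
end

section
/- There exist an integer k0 and constants C, c > 0 such that for every k >= k0 and every density r = 2^k * ln 2 - rho with 0 < rho <= 2, the degree sequence (d_l)_l of the uniform random formula Phi = Phi_k(n, floor(r*n)) satisfies the following with high probability: (1) for every fixed eps > 0, | sum over x in V of (d_x - d_{not x})^2 - k*m | <= eps * k * m; (2) (1/n) * sum over x in V of |d_x - d_{not x}| <= C * k^c * 2^{k/2}; (3) if M denotes a set of n literals of largest degree, then | (1/(k*m)) * sum over l in M of d_l - 1/2 | <= C * k^c * 2^{-k/2}. -/
open Classical Finset Filter

noncomputable section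

/-!
Attach to every literal `a` a vector `v a` of a Euclidean space, with `∑ a, v a = 0` and all the
norms `‖v a‖` equal. Reading the `km` literal occurrences of the formula as a random walk with
independent steps `v`, the diagonal part of `‖∑ v‖ ^ 2` is deterministic, and the off-diagonal part
is a sum over `p ≠ q` of `⟪v (Φ p), v (Φ q)⟫`, whose terms are pairwise uncorrelated apart from the
symmetry `(p, q) ↔ (q, p)` because each of them averages to `0` over either argument. Hence
`‖∑ v‖ ^ 2` has variance at most `2 (km) ^ 2 𝔼 ⟪v a, v b⟫ ^ 2`, which is `O((km) ^ 2 / n)` for the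
two choices made here, and Chebyshev's inequality applies.

With `v (±x) = ±eₓ`, the squared norm is `∑ (d_x - d_{¬x}) ^ 2`. With `v` the centred standard
basis, it is the sum of the squared deviations of the degrees from their average; by Cauchy–Schwarz
the sum of the absolute deviations is at most `2 √(n km)`, and this one quantity dominates both
`∑ |d_x - d_{¬x}|` and `|∑_{l ∈ M} d_l - km / 2|` for every set `M` of `n` literals.
-/

open scoped BigOperators RealInnerProductSpace

section UniformFunctions

variable {ι α : Type*} [Fintype ι] [DecidableEq ι] [Fintype α] [Nonempty α]

lemma expect_expect_update (F : (ι → α) → ℝ) (p : ι) :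
    𝔼 f, 𝔼 a, F (Function.update f p a) = 𝔼 f, F f := by
  have involutive : Function.Involutive
      fun z : (ι → α) × α ↦ (Function.update z.1 p z.2, z.1 p) := fun z ↦ by simp
  calc 𝔼 f, 𝔼 a, F (Function.update f p a)
      = 𝔼 z : (ι → α) × α, F (Function.update z.1 p z.2) := (expect_product' _ _ _).symm
    _ = 𝔼 z : (ι → α) × α, F z.1 :=
        Fintype.expect_equiv involutive.toPerm _ _ fun _ ↦ rfl
    _ = 𝔼 f, 𝔼 _a : α, F f := expect_product' _ _ fun f _ ↦ F f
    _ = 𝔼 f, F f := by simp only [Fintype.expect_const]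

lemma expect_apply_apply (G : α → α → ℝ) {p q : ι} (hpq : p ≠ q) :
    𝔼 f : ι → α, G (f p) (f q) = 𝔼 a, 𝔼 b, G a b := by
  rw [← expect_expect_update _ q, ← expect_expect_update _ p]
  simp only [Function.update_self, Function.update_of_ne hpq, Fintype.expect_const]

variable {g : α → α → ℝ}

lemma expect_apply_mul_eq_zero (hg : ∀ b, 𝔼 a, g a b = 0) {p q : ι} (hpq : p ≠ q)
    {h : (ι → α) → ℝ} (hh : ∀ f a, h (Function.update f p a) = h f) :
    𝔼 f : ι → α, g (f p) (f q) * h f = 0 := by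
  rw [← expect_expect_update _ p]
  simp only [Function.update_self, Function.update_of_ne hpq.symm, hh, ← expect_mul, hg, zero_mul,
    expect_const_zero]

lemma expect_apply_mul_apply_eq_zero (hsymm : ∀ a b, g a b = g b a) (hg : ∀ b, 𝔼 a, g a b = 0)
    {p q p' q' : ι} (hpq : p ≠ q) (hne : ¬(p' = p ∧ q' = q)) (hne_swap : ¬(p' = q ∧ q' = p)) :
    𝔼 f : ι → α, g (f p) (f q) * g (f p') (f q') = 0 := by
  have eq_zero_of_notMem {p q : ι} (hpq : p ≠ q) (hp : p' ≠ p ∧ q' ≠ p) :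
      𝔼 f : ι → α, g (f p) (f q) * g (f p') (f q') = 0 :=
    expect_apply_mul_eq_zero hg hpq fun f a ↦ by
      rw [Function.update_of_ne hp.1, Function.update_of_ne hp.2]
  by_cases hp : p' ≠ p ∧ q' ≠ p
  · exact eq_zero_of_notMem hpq hp
  · have hq : p' ≠ q ∧ q' ≠ q := by grind
    simpa only [fun f : ι → α ↦ hsymm (f q) (f p)] using eq_zero_of_notMem hpq.symm hq

theorem expect_sq_sum_offDiag (hsymm : ∀ a b, g a b = g b a) (hg : ∀ b, 𝔼 a, g a b = 0) :
    𝔼 f : ι → α, (∑ z ∈ univ.offDiag, g (f z.1) (f z.2)) ^ 2 =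
      2 * (Fintype.card ι * (Fintype.card ι - 1)) * 𝔼 a, 𝔼 b, g a b ^ 2 := by
  set V := 𝔼 a, 𝔼 b, g a b ^ 2
  have row_sum : ∀ z ∈ (univ : Finset ι).offDiag,
      ∑ z' ∈ univ.offDiag, 𝔼 f : ι → α, g (f z.1) (f z.2) * g (f z'.1) (f z'.2) = 2 * V := by
    rintro ⟨p, q⟩ hz
    have hpq : p ≠ q := (mem_offDiag.mp hz).2.2
    rw [sum_eq_add_of_mem (p, q) (q, p) hz (by simpa using hpq.symm) (by simp [hpq])]
    · simp only [fun f : ι → α ↦ hsymm (f q) (f p), ← sq, ← two_mul]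
      rw [expect_apply_apply (fun a b ↦ g a b ^ 2) hpq]
    · rintro ⟨p', q'⟩ - ⟨hne, hne_swap⟩
      exact expect_apply_mul_apply_eq_zero hsymm hg hpq (by simpa using hne)
        (by simpa using hne_swap)
  calc 𝔼 f : ι → α, (∑ z ∈ univ.offDiag, g (f z.1) (f z.2)) ^ 2
      = ∑ z ∈ univ.offDiag, ∑ z' ∈ univ.offDiag,
          𝔼 f : ι → α, g (f z.1) (f z.2) * g (f z'.1) (f z'.2) := by
        simp only [sq, sum_mul_sum, expect_sum_comm]
    _ = #(univ : Finset ι).offDiag * (2 * V) := by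
        rw [sum_congr rfl row_sum, sum_const, nsmul_eq_mul]
    _ = 2 * (Fintype.card ι * (Fintype.card ι - 1)) * V := by
        rw [offDiag_card, card_univ, Nat.cast_sub (Nat.le_mul_self _)]
        push_cast
        ring

end UniformFunctions

section RandomWalk

variable {ι α E : Type*} [Fintype ι] [NormedAddCommGroup E] [InnerProductSpace ℝ E]

lemma norm_sum_sq_eq_add_sum_offDiag (u : ι → E) :
    ‖∑ p, u p‖ ^ 2 = ∑ p, ‖u p‖ ^ 2 + ∑ z ∈ univ.offDiag, ⟪u z.1, u z.2⟫ := by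
  classical
  calc ‖∑ p, u p‖ ^ 2 = ∑ z ∈ univ ×ˢ univ, ⟪u z.1, u z.2⟫ := by
        rw [← real_inner_self_eq_norm_sq, sum_inner, sum_product]
        simp only [inner_sum]
    _ = ∑ p, ‖u p‖ ^ 2 + ∑ z ∈ univ.offDiag, ⟪u z.1, u z.2⟫ := by
        rw [← diag_union_offDiag, sum_union (disjoint_diag_offDiag _), sum_diag]
        simp only [real_inner_self_eq_norm_sq]

variable [DecidableEq ι] [Fintype α] [Nonempty α]

theorem expect_norm_sum_sq_sub_sq {v : α → E} {D : ℝ} (hv : ∑ a, v a = 0)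
    (hD : ∀ a, ‖v a‖ ^ 2 = D) :
    𝔼 f : ι → α, (‖∑ p, v (f p)‖ ^ 2 - Fintype.card ι * D) ^ 2 =
      2 * (Fintype.card ι * (Fintype.card ι - 1)) * 𝔼 a, 𝔼 b, ⟪v a, v b⟫ ^ 2 := by
  rw [← expect_sq_sum_offDiag (fun a b ↦ real_inner_comm _ _) fun b ↦ ?_]
  · simp only [norm_sum_sq_eq_add_sum_offDiag, hD, sum_const, card_univ, nsmul_eq_mul,
      add_sub_cancel_left]
  · rw [Fintype.expect_eq_sum_div_card, ← sum_inner, hv, inner_zero_left, zero_div]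

end RandomWalk

lemma one_sub_expect_sq_div_sq_le {Ω : Type*} [Fintype Ω] [Nonempty Ω] (X : Ω → ℝ) {t : ℝ}
    (ht : 0 < t) :
    1 - (𝔼 ω, X ω ^ 2) / t ^ 2 ≤ (#{ω | |X ω| ≤ t} : ℝ) / Fintype.card Ω := by
  have pointwise (ω : Ω) : 1 - X ω ^ 2 / t ^ 2 ≤ if |X ω| ≤ t then 1 else 0 := by
    split_ifs with h
    · exact sub_le_self _ (by positivity)
    · rw [sub_nonpos, one_le_div (by positivity), sq_le_sq, abs_of_pos ht]
      exact (not_le.mp h).le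
  calc 1 - (𝔼 ω, X ω ^ 2) / t ^ 2 = 𝔼 ω, (1 - X ω ^ 2 / t ^ 2) := by
        rw [expect_sub_distrib, Fintype.expect_const, expect_div]
    _ ≤ 𝔼 ω, if |X ω| ≤ t then 1 else 0 := expect_le_expect fun ω _ ↦ pointwise ω
    _ = (#{ω | |X ω| ≤ t} : ℝ) / Fintype.card Ω := by
        rw [Fintype.expect_eq_sum_div_card, sum_boole]

lemma tendsto_one_of_eventually_one_sub_div_le {f : ℕ → ℝ} (c : ℝ) (hf : ∀ n, f n ≤ 1)
    (h : ∀ᶠ n : ℕ in atTop, 1 - c / (n : ℝ) ≤ f n) : Tendsto f atTop (nhds 1) := by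
  refine tendsto_of_tendsto_of_tendsto_of_le_of_le' ?_ tendsto_const_nhds h (.of_forall hf)
  simpa using (tendsto_const_div_atTop_nhds_zero_nat c).const_sub 1

lemma sum_abs_le_sqrt_card_mul_sum_sq {ι : Type*} (s : Finset ι) (f : ι → ℝ) :
    ∑ i ∈ s, |f i| ≤ √(#s * ∑ i ∈ s, f i ^ 2) := by
  refine Real.le_sqrt_of_sq_le ?_
  simpa only [sq_abs] using sq_sum_le_card_mul_sum_sq (s := s) (f := fun i ↦ |f i|)

section Formulas

variable {n k m : ℕ}

lemma prF_mono {P Q : Formula n k m → Prop} (h : ∀ Φ, P Φ → Q Φ) :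
    prF n k m P ≤ prF n k m Q := by
  unfold prF
  gcongr
  exact h _

lemma prF_le_one (P : Formula n k m → Prop) : prF n k m P ≤ 1 :=
  div_le_one_of_le₀ (mod_cast card_le_univ _) (by positivity)

section LiteralWalk

variable {E : Type*} [NormedAddCommGroup E] [InnerProductSpace ℝ E] {v : Lit n → E} {D : ℝ}

lemma expect_formula_norm_sum_sq_sub_sq (hn : 0 < n) (hv : ∑ a, v a = 0)
    (hD : ∀ a, ‖v a‖ ^ 2 = D) :
    𝔼 Φ : Formula n k m, (‖∑ p : Fin m × Fin k, v (Φ p.1 p.2)‖ ^ 2 - k * m * D) ^ 2 =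
      2 * (k * m * (k * m - 1)) * 𝔼 a, 𝔼 b, ⟪v a, v b⟫ ^ 2 := by
  have : NeZero n := ⟨hn.ne'⟩
  calc _ = 𝔼 f : Fin m × Fin k → Lit n,
        (‖∑ p, v (f p)‖ ^ 2 - Fintype.card (Fin m × Fin k) * D) ^ 2 :=
        Fintype.expect_equiv (Equiv.curry _ _ _).symm _ _ fun Φ ↦ by
          simp [mul_comm, Function.uncurry_def]
    _ = _ := by
        rw [expect_norm_sum_sq_sub_sq hv hD]
        simp only [Fintype.card_prod, Fintype.card_fin, Nat.cast_mul, mul_comm (m : ℝ)]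

theorem one_sub_le_prF_abs_norm_sum_sq_sub {ε : ℝ} (hn : 0 < n) (hkm : 0 < k * m)
    (hv : ∑ a, v a = 0) (hD : ∀ a, ‖v a‖ ^ 2 = D) (hε : 0 < ε) :
    1 - 2 * (𝔼 a, 𝔼 b, ⟪v a, v b⟫ ^ 2) / ε ^ 2 ≤ prF n k m fun Φ ↦
      |‖∑ p : Fin m × Fin k, v (Φ p.1 p.2)‖ ^ 2 - k * m * D| ≤ ε * (k * m) := by
  have : NeZero n := ⟨hn.ne'⟩
  have hkm' : (0 : ℝ) < k * m := mod_cast hkm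
  have chebyshev := one_sub_expect_sq_div_sq_le
    (fun Φ : Formula n k m ↦ ‖∑ p : Fin m × Fin k, v (Φ p.1 p.2)‖ ^ 2 - k * m * D)
    (mul_pos hε hkm')
  rw [expect_formula_norm_sum_sq_sub_sq hn hv hD] at chebyshev
  set V := 𝔼 a, 𝔼 b, ⟪v a, v b⟫ ^ 2
  have : 0 ≤ V := expect_nonneg fun a _ ↦ expect_nonneg fun b _ ↦ sq_nonneg _
  calc 1 - 2 * V / ε ^ 2 = 1 - 2 * (k * m * (k * m)) * V / (ε * (k * m)) ^ 2 := by
        rw [mul_pow, ← sq, mul_right_comm 2 _ V, mul_div_mul_right _ _ (pow_ne_zero 2 hkm'.ne')]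
    _ ≤ 1 - 2 * (k * m * (k * m - 1)) * V / (ε * (k * m)) ^ 2 := by
        gcongr
        exact sub_le_self _ zero_le_one
    _ ≤ _ := chebyshev
    _ = _ := by unfold prF; congr

end LiteralWalk

lemma natCast_occ_eq_sum (Φ : Formula n k m) (l : Lit n) :
    (occ n k m Φ l : ℝ) = ∑ p : Fin m × Fin k, if Φ p.1 p.2 = l then 1 else 0 := by
  simp [occ]

end Formulas

section SignedDegrees

variable {n k m : ℕ}

/-- The vector `±eₓ` attached to a literal of the variable `x`. Summed over all the literal
occurrences of a formula, these vectors give the signed degrees `d_x - d_{¬x}`. -/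
def litVector (l : Lit n) : EuclideanSpace ℝ (Fin n) :=
  EuclideanSpace.single l.1 (if l.2 then 1 else -1)

lemma litVector_apply (l : Lit n) (x : Fin n) :
    litVector l x = (if l = (x, true) then 1 else 0) - if l = (x, false) then 1 else 0 := by
  obtain ⟨y, s⟩ := l
  cases s <;> simp [litVector, eq_comm, apply_ite]

lemma sum_litVector : ∑ l : Lit n, litVector l = 0 := by
  ext x
  simp [litVector_apply]

lemma norm_litVector (l : Lit n) : ‖litVector l‖ = 1 := by
  rw [litVector, PiLp.norm_single]
  split_ifs <;> simp

lemma inner_litVector_sq (a b : Lit n) :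
    ⟪litVector a, litVector b⟫ ^ 2 = if a.1 = b.1 then 1 else 0 := by
  simp only [litVector, EuclideanSpace.inner_single_left, PiLp.single_apply]
  split_ifs <;> simp

lemma expect_inner_litVector_sq (hn : 0 < n) :
    𝔼 a : Lit n, 𝔼 b : Lit n, ⟪litVector a, litVector b⟫ ^ 2 = 1 / n := by
  have : NeZero n := ⟨hn.ne'⟩
  have row (a : Lit n) : 𝔼 b, ⟪litVector a, litVector b⟫ ^ 2 = 1 / n := by
    simp only [inner_litVector_sq, Fintype.expect_eq_sum_div_card, Fintype.sum_prod_type_right,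
      sum_ite_eq, mem_univ, if_true, sum_const, card_univ, Fintype.card_prod, Fintype.card_fin,
      Fintype.card_bool, nsmul_eq_mul, mul_one, Nat.cast_mul]
    field_simp
  simp only [row, Fintype.expect_const]

lemma norm_sum_litVector_sq (Φ : Formula n k m) :
    ‖∑ p : Fin m × Fin k, litVector (Φ p.1 p.2)‖ ^ 2 =
      ∑ x, ((occ n k m Φ (x, true) : ℝ) - occ n k m Φ (x, false)) ^ 2 := by
  rw [EuclideanSpace.real_norm_sq_eq]
  refine sum_congr rfl fun x _ ↦ congrArg (· ^ 2) ?_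
  simp only [WithLp.ofLp_sum, Finset.sum_apply, litVector_apply, sum_sub_distrib,
    natCast_occ_eq_sum]

theorem one_sub_le_prF_abs_sum_sq_signedDegree_sub {ε : ℝ} (hn : 0 < n) (hkm : 0 < k * m)
    (hε : 0 < ε) :
    1 - 2 / ε ^ 2 / n ≤ prF n k m fun Φ ↦
      |∑ x, ((occ n k m Φ (x, true) : ℝ) - occ n k m Φ (x, false)) ^ 2 - k * m| ≤
        ε * (k * m) := by
  have h := one_sub_le_prF_abs_norm_sum_sq_sub hn hkm sum_litVector
    (fun l ↦ by rw [norm_litVector, one_pow]) hε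
  simp only [norm_sum_litVector_sq, expect_inner_litVector_sq hn, mul_one] at h
  rwa [mul_one_div, div_right_comm] at h

end SignedDegrees

section CentredVectors

variable {α : Type*} [Fintype α] [DecidableEq α]

/-- The standard basis vector of `a`, centred by subtracting the average of all the standard basis
vectors. Summed over a sequence of elements, these vectors give the deviations of the occurrence
counts from their average. -/
def centredSingle (a : α) : EuclideanSpace ℝ α :=
  EuclideanSpace.single a 1 - WithLp.toLp 2 fun _ ↦ 1 / (Fintype.card α : ℝ)

lemma centredSingle_apply (a b : α) :
    centredSingle a b = (if a = b then 1 else 0) - 1 / (Fintype.card α : ℝ) := by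
  simp [centredSingle, PiLp.single_apply, eq_comm]

variable [Nonempty α]

lemma sum_centredSingle : ∑ a : α, centredSingle a = 0 := by
  ext b
  simp [centredSingle_apply]

lemma inner_centredSingle (a b : α) :
    ⟪centredSingle a, centredSingle b⟫ = (if a = b then 1 else 0) - 1 / (Fintype.card α : ℝ) := by
  have sum_apply_eq_zero : ∑ x, centredSingle a x = 0 := by simp [centredSingle_apply]
  calc ⟪centredSingle a, centredSingle b⟫
      = ∑ x, centredSingle b x * centredSingle a x := by simp [PiLp.inner_apply]
    _ = ∑ x, (if b = x then 1 else 0) * centredSingle a x := by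
        simp only [centredSingle_apply b, sub_mul, sum_sub_distrib, ← mul_sum, sum_apply_eq_zero,
          mul_zero, sub_zero]
    _ = (if a = b then 1 else 0) - 1 / (Fintype.card α : ℝ) := by
        simp [centredSingle_apply]

lemma norm_centredSingle_sq (a : α) :
    ‖centredSingle a‖ ^ 2 = 1 - 1 / (Fintype.card α : ℝ) := by
  rw [← real_inner_self_eq_norm_sq, inner_centredSingle, if_pos rfl]

lemma expect_inner_centredSingle_sq_le :
    𝔼 a : α, 𝔼 b : α, ⟪centredSingle a, centredSingle b⟫ ^ 2 ≤ 1 / Fintype.card α := by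
  have row (a : α) :
      𝔼 b, ⟪centredSingle a, centredSingle b⟫ ^ 2 ≤ 1 / Fintype.card α := by
    calc 𝔼 b, ⟪centredSingle a, centredSingle b⟫ ^ 2
        = (∑ b, centredSingle a b ^ 2) / Fintype.card α := by
          simp only [Fintype.expect_eq_sum_div_card, inner_centredSingle, centredSingle_apply]
      _ = (1 - 1 / (Fintype.card α : ℝ)) / Fintype.card α := by
          rw [← EuclideanSpace.real_norm_sq_eq, norm_centredSingle_sq]
      _ ≤ 1 / Fintype.card α := by
          gcongr
          exact sub_le_self _ (by positivity)
  calc 𝔼 a : α, 𝔼 b : α, ⟪centredSingle a, centredSingle b⟫ ^ 2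
      ≤ 𝔼 _a : α, 1 / (Fintype.card α : ℝ) := expect_le_expect fun a _ ↦ row a
    _ = 1 / Fintype.card α := Fintype.expect_const _

end CentredVectors

section DegreeDeviation

variable {n k m : ℕ}

/-- The deviation of the degree `d_l` from the average degree `km / (2n)` of a literal. -/
def degreeDeviation (Φ : Formula n k m) (l : Lit n) : ℝ := occ n k m Φ l - k * m / (2 * n)

lemma norm_sum_centredSingle_sq (Φ : Formula n k m) :
    ‖∑ p : Fin m × Fin k, centredSingle (Φ p.1 p.2)‖ ^ 2 = ∑ l, degreeDeviation Φ l ^ 2 := by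
  rw [EuclideanSpace.real_norm_sq_eq]
  refine sum_congr rfl fun l _ ↦ congrArg (· ^ 2) ?_
  simp only [WithLp.ofLp_sum, Finset.sum_apply, centredSingle_apply, sum_sub_distrib,
    ← natCast_occ_eq_sum, degreeDeviation, sum_const, card_univ, Fintype.card_prod,
    Fintype.card_fin, Fintype.card_bool, nsmul_eq_mul]
  push_cast
  ring

theorem one_sub_le_prF_sum_degreeDeviation_sq_le (hn : 0 < n) (hkm : 0 < k * m) :
    1 - 1 / (n : ℝ) ≤ prF n k m fun Φ ↦ ∑ l, degreeDeviation Φ l ^ 2 ≤ 2 * (k * m) := by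
  have : NeZero n := ⟨hn.ne'⟩
  set K : ℝ := (Fintype.card (Lit n) : ℝ) with hK
  have card_lit : K = 2 * n := by simp [hK, mul_comm]
  have concentration := one_sub_le_prF_abs_norm_sum_sq_sub (n := n) hn hkm sum_centredSingle
    norm_centredSingle_sq one_pos
  simp only [norm_sum_centredSingle_sq, one_pow, div_one, one_mul] at concentration
  calc 1 - 1 / (n : ℝ) = 1 - 2 * (1 / K) := by rw [card_lit]; field_simp
    _ ≤ 1 - 2 * 𝔼 a : Lit n, 𝔼 b, ⟪centredSingle a, centredSingle b⟫ ^ 2 := by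
        gcongr
        exact expect_inner_centredSingle_sq_le
    _ ≤ _ := concentration
    _ ≤ _ := prF_mono fun Φ hΦ ↦ by
        have : 0 ≤ k * m * (1 / K) := by positivity
        linarith [(abs_le.mp hΦ).2]

theorem one_sub_le_prF_sum_abs_degreeDeviation_le (hn : 0 < n) (hkm : 0 < k * m) :
    1 - 1 / (n : ℝ) ≤ prF n k m fun Φ ↦ ∑ l, |degreeDeviation Φ l| ≤ 2 * √(n * (k * m)) := by
  refine (one_sub_le_prF_sum_degreeDeviation_sq_le hn hkm).trans (prF_mono fun Φ hΦ ↦ ?_)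
  calc ∑ l, |degreeDeviation Φ l|
      ≤ √(#(univ : Finset (Lit n)) * ∑ l, degreeDeviation Φ l ^ 2) :=
        sum_abs_le_sqrt_card_mul_sum_sq _ _
    _ ≤ √((n * 2) * (2 * (k * m))) := by
        gcongr
        simp
    _ = √(2 ^ 2 * (n * (k * m))) := by ring_nf
    _ = 2 * √(n * (k * m)) := by rw [Real.sqrt_mul (by positivity), Real.sqrt_sq zero_le_two]

lemma sum_abs_signedDegree_le (Φ : Formula n k m) :
    ∑ x, |(occ n k m Φ (x, true) : ℝ) - occ n k m Φ (x, false)| ≤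
      ∑ l, |degreeDeviation Φ l| := by
  simp only [Fintype.sum_prod_type, Fintype.sum_bool]
  gcongr with x
  calc |(occ n k m Φ (x, true) : ℝ) - occ n k m Φ (x, false)|
      = |degreeDeviation Φ (x, true) - degreeDeviation Φ (x, false)| := by
        simp only [degreeDeviation, sub_sub_sub_cancel_right]
    _ ≤ |degreeDeviation Φ (x, true)| + |degreeDeviation Φ (x, false)| := abs_sub _ _

lemma abs_sum_occ_div_sub_half_le (hn : 0 < n) (hkm : 0 < k * m) (Φ : Formula n k m)
    {M : Finset (Lit n)} (hM : #M = n) :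
    |1 / (k * m) * ∑ l ∈ M, (occ n k m Φ l : ℝ) - 1 / 2| ≤
      (∑ l, |degreeDeviation Φ l|) / (k * m) := by
  have hkm' : (0 : ℝ) < k * m := mod_cast hkm
  have sum_deviation :
      ∑ l ∈ M, degreeDeviation Φ l = ∑ l ∈ M, (occ n k m Φ l : ℝ) - k * m / 2 := by
    simp only [degreeDeviation, sum_sub_distrib, sum_const, hM, nsmul_eq_mul]
    field_simp
  calc |1 / (k * m) * ∑ l ∈ M, (occ n k m Φ l : ℝ) - 1 / 2|
      = |(∑ l ∈ M, degreeDeviation Φ l) / (k * m)| := by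
        rw [sum_deviation, sub_div, div_right_comm, div_self hkm'.ne', one_div_mul_eq_div]
    _ = |∑ l ∈ M, degreeDeviation Φ l| / (k * m) := by rw [abs_div, abs_of_pos hkm']
    _ ≤ (∑ l, |degreeDeviation Φ l|) / (k * m) := by
        gcongr
        exact (abs_sum_le_sum_abs _ _).trans
          (sum_le_sum_of_subset_of_nonneg (subset_univ M) fun _ _ _ ↦ abs_nonneg _)

end DegreeDeviation

section LinearDensity

lemma eventually_one_le_mul_natCast {r : ℝ} (hr : 0 < r) : ∀ᶠ n : ℕ in atTop, 1 ≤ r * n :=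
  (tendsto_natCast_atTop_atTop.const_mul_atTop hr).eventually_ge_atTop 1

lemma two_mul_sqrt_div_le_of_le_mul {n k m r : ℝ} (hn : 0 < n) (hk : 0 ≤ k) (hm : m ≤ r * n) :
    1 / n * (2 * √(n * (k * m))) ≤ 2 * √(k * r) := by
  calc 1 / n * (2 * √(n * (k * m)))
      ≤ 1 / n * (2 * √(n * (k * (r * n)))) := by gcongr
    _ = 1 / n * (2 * √(n ^ 2 * (k * r))) := by ring_nf
    _ = 2 * √(k * r) := by
        rw [Real.sqrt_mul (by positivity), Real.sqrt_sq hn.le]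
        field_simp

lemma two_mul_sqrt_div_le_of_mul_div_two_le {n k m r : ℝ} (hk : 0 < k) (hr : 0 < r) (hm₀ : 0 < m)
    (hm : r * n / 2 ≤ m) : 2 * √(n * (k * m)) / (k * m) ≤ 3 / √(k * r) := by
  have sqrt_le : √(n * (k * m)) * √(k * r) ≤ 3 / 2 * (k * m) := by
    rw [← Real.sqrt_mul' _ (by positivity)]
    refine Real.sqrt_le_iff.mpr ⟨by positivity, ?_⟩
    calc n * (k * m) * (k * r) = 2 * (k ^ 2 * m) * (r * n / 2) := by ring
      _ ≤ 2 * (k ^ 2 * m) * m := by gcongr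
      _ ≤ (3 / 2 * (k * m)) ^ 2 := by nlinarith [sq_nonneg (k * m)]
  rw [div_le_div_iff₀ (by positivity) (by positivity), mul_assoc]
  linarith

theorem statement9_general {k : ℕ} {r : ℝ} (hk : 0 < k) (hr : 0 < r) :
    (∀ eps : ℝ, 0 < eps →
      Tendsto
        (fun n : ℕ ↦
          prF n k ⌊r * n⌋₊ fun Φ ↦
            |(∑ x : Fin n, ((occ n k _ Φ (x, true) : ℝ) - occ n k _ Φ (x, false)) ^ 2) -
              k * ⌊r * n⌋₊| ≤ eps * (k * ⌊r * n⌋₊))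
        atTop (nhds 1)) ∧
    Tendsto
      (fun n : ℕ ↦
        prF n k ⌊r * n⌋₊ fun Φ ↦
          1 / (n : ℝ) * ∑ x : Fin n, |(occ n k _ Φ (x, true) : ℝ) - occ n k _ Φ (x, false)| ≤
            2 * √(k * r) ∧
          ∀ M : Finset (Lit n), #M = n →
            |1 / (k * ⌊r * n⌋₊ : ℝ) * ∑ l ∈ M, (occ n k _ Φ l : ℝ) - 1 / 2| ≤ 3 / √(k * r))
      atTop (nhds 1) := by
  constructor
  · intro eps heps
    refine tendsto_one_of_eventually_one_sub_div_le (2 / eps ^ 2) (fun n ↦ prF_le_one _) ?_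
    filter_upwards [eventually_gt_atTop 0, eventually_one_le_mul_natCast hr] with n hn hrn
    exact one_sub_le_prF_abs_sum_sq_signedDegree_sub hn
      (Nat.mul_pos hk (Nat.floor_pos.mpr hrn)) heps
  · refine tendsto_one_of_eventually_one_sub_div_le 1 (fun n ↦ prF_le_one _) ?_
    filter_upwards [eventually_gt_atTop 0, eventually_one_le_mul_natCast hr] with n hn hrn
    have hm : 0 < ⌊r * n⌋₊ := Nat.floor_pos.mpr hrn
    refine (one_sub_le_prF_sum_abs_degreeDeviation_le hn (Nat.mul_pos hk hm)).trans
      (prF_mono fun Φ hΦ ↦ ⟨?_, fun M hM ↦ ?_⟩)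
    · have hn' : (0 : ℝ) < n := mod_cast hn
      calc _ ≤ 1 / (n : ℝ) * (2 * √(n * (k * ⌊r * n⌋₊))) := by
            gcongr
            exact (sum_abs_signedDegree_le Φ).trans hΦ
        _ ≤ 2 * √(k * r) :=
            two_mul_sqrt_div_le_of_le_mul hn' k.cast_nonneg (Nat.floor_le (by positivity))
    · calc _ ≤ (∑ l, |degreeDeviation Φ l|) / (k * ⌊r * n⌋₊) :=
            abs_sum_occ_div_sub_half_le hn (Nat.mul_pos hk hm) Φ hM
        _ ≤ 2 * √(n * (k * ⌊r * n⌋₊)) / (k * ⌊r * n⌋₊) := by gcongr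
        _ ≤ 3 / √(k * r) :=
            two_mul_sqrt_div_le_of_mul_div_two_le (mod_cast hk) hr (mod_cast hm)
              (Nat.div_two_lt_floor hrn).le

end LinearDensity

section ThresholdDensity

variable {k : ℕ} {r rho : ℝ}

lemma two_pow_div_four_le_density (hk : 3 ≤ k) (hrho : rho ≤ 2) :
    2 ^ k / 4 ≤ 2 ^ k * Real.log 2 - rho := by
  have two_pow_ge : (2 : ℝ) ^ 3 ≤ 2 ^ k := pow_le_pow_right₀ one_le_two hk
  nlinarith [Real.log_two_gt_d9]

lemma density_le_two_pow (hrho : 0 < rho) : 2 ^ k * Real.log 2 - rho ≤ 2 ^ k := by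
  have : (2 : ℝ) ^ k * Real.log 2 ≤ 2 ^ k :=
    mul_le_of_le_one_right (by positivity) (Real.log_two_lt_d9.le.trans (by norm_num))
  linarith

lemma two_rpow_half_eq_sqrt (k : ℕ) : (2 : ℝ) ^ ((k : ℝ) / 2) = √(2 ^ k) := by
  rw [Real.sqrt_eq_rpow, ← Real.rpow_natCast, ← Real.rpow_mul zero_le_two, mul_one_div]

lemma two_mul_sqrt_mul_le_of_le_two_pow (hr : r ≤ 2 ^ k) :
    2 * √(k * r) ≤ 6 * (k : ℝ) ^ (1 / 2 : ℝ) * 2 ^ ((k : ℝ) / 2) := by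
  rw [← Real.sqrt_eq_rpow, two_rpow_half_eq_sqrt, mul_assoc, ← Real.sqrt_mul k.cast_nonneg]
  gcongr
  norm_num

lemma three_div_sqrt_mul_le_of_two_pow_div_four_le (hk : 0 < k) (hr : 2 ^ k / 4 ≤ r) :
    3 / √(k * r) ≤ 6 * (k : ℝ) ^ (1 / 2 : ℝ) * 2 ^ (-(k : ℝ) / 2) := by
  have hk' : (1 : ℝ) ≤ k := mod_cast hk
  calc 3 / √(k * r) ≤ 3 / √(1 * (2 ^ k / 2 ^ 2)) := by
        gcongr
        linarith
    _ = 6 * 1 * 2 ^ (-(k : ℝ) / 2) := by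
        rw [one_mul, Real.sqrt_div' _ (by positivity), Real.sqrt_sq zero_le_two, neg_div,
          Real.rpow_neg zero_le_two, two_rpow_half_eq_sqrt]
        field_simp
        norm_num
    _ ≤ 6 * (k : ℝ) ^ (1 / 2 : ℝ) * 2 ^ (-(k : ℝ) / 2) := by
        gcongr
        exact Real.one_le_rpow hk' (by norm_num)

end ThresholdDensity

/-- There are `k0` and constants `C, c > 0` such that for `k ≥ k0` and
`r = 2^k ln 2 - ρ` with `0 < ρ ≤ 2`, the degree sequence of the random formula whp
satisfies: (1) for every fixed `ε > 0`, `|∑_x (d_x - d_{¬x})² - km| ≤ ε k m`;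
(2) `(1/n) ∑_x |d_x - d_{¬x}| ≤ C k^c 2^{k/2}`; and (3) for every set `M` of `n` literals
of largest degree, `|(1/(km)) ∑_{l ∈ M} d_l - 1/2| ≤ C k^c 2^{-k/2}`. -/
theorem statement9 :
    ∃ (k0 : ℕ) (C c : ℝ), 0 < C ∧ 0 < c ∧
      ∀ k : ℕ, k0 ≤ k → ∀ rho : ℝ, 0 < rho → rho ≤ 2 →
        (∀ eps : ℝ, 0 < eps →
          Tendsto
            (fun n : ℕ =>
              let m := ⌊(2 ^ k * Real.log 2 - rho) * (n : ℝ)⌋₊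
              prF n k m fun Φ =>
                |(∑ x : Fin n,
                    ((occ n k m Φ (x, true) : ℝ) - (occ n k m Φ (x, false) : ℝ)) ^ 2) -
                  (k : ℝ) * m| ≤ eps * ((k : ℝ) * m))
            atTop (nhds 1)) ∧
        Tendsto
          (fun n : ℕ =>
            let m := ⌊(2 ^ k * Real.log 2 - rho) * (n : ℝ)⌋₊
            prF n k m fun Φ =>
              ((1 / (n : ℝ)) *
                  ∑ x : Fin n, |(occ n k m Φ (x, true) : ℝ) - (occ n k m Φ (x, false) : ℝ)| ≤
                C * (k : ℝ) ^ c * (2 : ℝ) ^ ((k : ℝ) / 2)) ∧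
              ∀ M : Finset (Lit n), M.card = n →
                (∀ l ∈ M, ∀ l' ∉ M, occ n k m Φ l' ≤ occ n k m Φ l) →
                |(1 / ((k : ℝ) * m)) * (∑ l ∈ M, (occ n k m Φ l : ℝ)) - 1 / 2| ≤
                  C * (k : ℝ) ^ c * (2 : ℝ) ^ (-(k : ℝ) / 2))
          atTop (nhds 1) := by
  refine ⟨3, 6, 1 / 2, by norm_num, by norm_num, fun k hk rho hrho hrho_le ↦ ?_⟩
  have hk₀ : 0 < k := by omega
  have density_ge := two_pow_div_four_le_density hk hrho_le
  have density_pos : 0 < 2 ^ k * Real.log 2 - rho := lt_of_lt_of_le (by positivity) density_ge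
  obtain ⟨square_sum, linear_bounds⟩ := statement9_general hk₀ density_pos
  refine ⟨square_sum, tendsto_of_tendsto_of_tendsto_of_le_of_le linear_bounds tendsto_const_nhds
    (fun n ↦ prF_mono fun Φ hΦ ↦ ?_) fun n ↦ prF_le_one _⟩
  exact ⟨hΦ.1.trans (two_mul_sqrt_mul_le_of_le_two_pow (density_le_two_pow hrho)),
    fun M hM _ ↦ (hΦ.2 M hM).trans (three_div_sqrt_mul_le_of_two_pow_div_four_le hk₀ density_ge)⟩
end
end

section
/- There exists an integer k0 such that for every k >= k0, every density r = 2^k * ln 2 - rho with 0 < rho <= 2, and all sufficiently large n, the uniform random formula Phi = Phi_k(n, floor(r*n)) satisfies: (1) the expected number of satisfying assignments sigma of Phi under which more than k^{12} * 2^{-k} * n variables support at most 12 clauses is at most exp(-n * k^9 / 2^k) * E[|S(Phi)|]; (2) the expected number of satisfying assignments sigma of Phi under which more than (1 + 1/k^2) * 2^{-k} * n variables support no clause at all is at most exp(-n/(k^6 * 2^k)) * E[|S(Phi)|]. -/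
open Classical Finset Filter

noncomputable section

/-- Under `σ`, variable `x` supports clause `i` of `Φ` if some literal of `x` in that
clause is true under `σ` while all other literals of the clause are false. -/
def Supports (n k m : ℕ) (σ : Assignment n) (Φ : Formula n k m) (x : Fin n)
    (i : Fin m) : Prop :=
  ∃ j : Fin k, (Φ i j).1 = x ∧ litVal σ (Φ i j) = true ∧
    ∀ j' : Fin k, j' ≠ j → litVal σ (Φ i j') = false

/-- The number of clauses supported by `x` under `σ`. -/
def supCount (n k m : ℕ) (σ : Assignment n) (Φ : Formula n k m) (x : Fin n) : ℕ :=
  (univ.filter fun i : Fin m => Supports n k m σ Φ x i).card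

/-!
Under the uniform distribution on the formulas satisfied by a fixed `σ`, the clauses are independent
and uniform among the clauses that `σ` satisfies. Such a clause is supported by at most one
variable, and by each given one with probability at least `k / (2 ^ k * n)`, so the support counts
are the loads of `n` bins into which `m` balls are thrown. As a ball hits at most one bin,
`𝔼 ∏ x ∈ S, θ ^ load x` is, for every set `S` of bins and `0 ≤ θ ≤ 1`, at most what independent
Poisson loads would give, `exp (-(1 - θ) * mean) ^ #S`. Expanding `∏ x, (1 + b * θ ^ load x)` over
the sets `S` therefore bounds its expectation, and since each bin of load at most `c` contributes a
factor at least `1 + b * θ ^ c`, Markov's inequality bounds the number of such bins. The mean load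
is close to `k * log 2`. Bins of load at most `12` are treated with `θ = 12 / k`, `b * θ ^ 12 = 1`,
and empty bins with `θ = 0`, `b = 1 / k ^ 2`.
-/

section Occupancy

variable {ι α β : Type*} [Fintype ι]

/-- The load of the bin `x` when one ball is thrown for every `i : ι`, the `i`-th throw has outcome
`w i`, and `R a x` says that a throw with outcome `a` lands in `x`. Outcomes that land in no bin
are allowed. -/
def binLoad (R : α → β → Prop) (w : ι → α) (x : β) : ℕ := #{i | R (w i) x}

lemma sum_prod_pow_binLoad [DecidableEq ι] {M : Type*} [CommSemiring M] (R : α → β → Prop)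
    (A : Finset α) (S : Finset β) (θ : M) :
    ∑ w ∈ Fintype.piFinset fun _ : ι ↦ A, ∏ x ∈ S, θ ^ binLoad R w x =
      (∑ a ∈ A, θ ^ #{x ∈ S | R a x}) ^ Fintype.card ι := by
  have prod_pow_eq (w : ι → α) :
      ∏ x ∈ S, θ ^ binLoad R w x = ∏ i, θ ^ #{x ∈ S | R (w i) x} := by
    rw [prod_pow_eq_pow_sum, prod_pow_eq_pow_sum]
    congr 1
    exact (sum_card_bipartiteAbove_eq_sum_card_bipartiteBelow fun i x ↦ R (w i) x).symm
  simp only [prod_pow_eq]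
  rw [sum_prod_piFinset A fun _ a ↦ θ ^ #{x ∈ S | R a x}, prod_const, card_univ]

variable {R : α → β → Prop} {A : Finset α} {θ q : ℝ}

lemma sum_pow_card_filter_le (hR : ∀ a ∈ A, {x | R a x}.Subsingleton)
    (hq : ∀ x, q * #A ≤ #{a ∈ A | R a x}) (hθ : θ ≤ 1) (S : Finset β) :
    ∑ a ∈ A, θ ^ #{x ∈ S | R a x} ≤ #A * Real.exp (-((1 - θ) * q)) ^ #S := by
  have pow_eq : ∀ a ∈ A, θ ^ #{x ∈ S | R a x} = 1 - (1 - θ) * #{x ∈ S | R a x} := by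
    intro a ha
    have card_le : #{x ∈ S | R a x} ≤ 1 :=
      card_le_one.2 fun x hx y hy ↦ hR a ha (mem_filter.1 hx).2 (mem_filter.1 hy).2
    interval_cases #{x ∈ S | R a x} <;> simp
  have double_count : ∑ a ∈ A, #{x ∈ S | R a x} = ∑ x ∈ S, #{a ∈ A | R a x} :=
    sum_card_bipartiteAbove_eq_sum_card_bipartiteBelow R
  have le_hits : #S * (q * #A) ≤ ∑ x ∈ S, (#{a ∈ A | R a x} : ℝ) := by
    rw [← nsmul_eq_mul]
    exact card_nsmul_le_sum _ _ _ fun x _ ↦ hq x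
  calc ∑ a ∈ A, θ ^ #{x ∈ S | R a x}
      = #A - (1 - θ) * ∑ x ∈ S, (#{a ∈ A | R a x} : ℝ) := by
        rw [sum_congr rfl pow_eq, sum_sub_distrib, ← mul_sum, sum_const, nsmul_one]
        exact_mod_cast congrArg (fun N : ℕ ↦ (#A : ℝ) - (1 - θ) * N) double_count
    _ ≤ #A - (1 - θ) * (#S * (q * #A)) := by gcongr
    _ = #A * (#S * -((1 - θ) * q) + 1) := by ring
    _ ≤ #A * Real.exp (-((1 - θ) * q)) ^ #S := by
        rw [← Real.exp_nat_mul]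
        gcongr
        exact Real.add_one_le_exp _

variable [Fintype β]

lemma sum_prod_one_add_pow_binLoad_le [DecidableEq ι] (hR : ∀ a ∈ A, {x | R a x}.Subsingleton)
    (hq : ∀ x, q * #A ≤ #{a ∈ A | R a x}) (hθ₀ : 0 ≤ θ) (hθ₁ : θ ≤ 1) {b : ℝ} (hb : 0 ≤ b) :
    ∑ w ∈ Fintype.piFinset fun _ : ι ↦ A, ∏ x, (1 + b * θ ^ binLoad R w x) ≤
      Real.exp (Fintype.card β * (b * Real.exp (-((1 - θ) * (q * Fintype.card ι))))) *
        #A ^ Fintype.card ι := by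
  set Q := Real.exp (-((1 - θ) * (q * Fintype.card ι))) with hQ
  have sum_subset_le (S : Finset β) :
      ∑ w ∈ Fintype.piFinset fun _ : ι ↦ A, ∏ x ∈ S, θ ^ binLoad R w x ≤
        #A ^ Fintype.card ι * Q ^ #S := by
    have Q_eq : Q = Real.exp (-((1 - θ) * q)) ^ Fintype.card ι := by
      rw [hQ, ← Real.exp_nat_mul]
      ring_nf
    rw [sum_prod_pow_binLoad, Q_eq, pow_right_comm, ← mul_pow]
    gcongr
    exact sum_pow_card_filter_le hR hq hθ₁ S
  calc ∑ w ∈ Fintype.piFinset fun _ : ι ↦ A, ∏ x, (1 + b * θ ^ binLoad R w x)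
      = ∑ S : Finset β, b ^ #S *
          ∑ w ∈ Fintype.piFinset fun _ : ι ↦ A, ∏ x ∈ S, θ ^ binLoad R w x := by
        simp only [prod_one_add, prod_mul_distrib, prod_const, powerset_univ, mul_sum]
        exact sum_comm
    _ ≤ ∑ S : Finset β, b ^ #S * (#A ^ Fintype.card ι * Q ^ #S) := by
        gcongr with S
        exact sum_subset_le S
    _ = (∏ _x : β, (1 + b * Q)) * #A ^ Fintype.card ι := by
        simp only [prod_one_add, prod_const, powerset_univ, sum_mul, mul_pow]
        exact sum_congr rfl fun S _ ↦ by ring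
    _ ≤ Real.exp (Fintype.card β * (b * Q)) * #A ^ Fintype.card ι := by
        gcongr
        rw [← card_univ, ← nsmul_eq_mul, ← sum_const]
        exact Real.prod_one_add_le_exp_sum _ fun _ ↦ by positivity

lemma one_add_pow_card_le_prod (f : β → ℕ) {c : ℕ} (hθ₀ : 0 ≤ θ) (hθ₁ : θ ≤ 1) (hθc : 0 < θ ^ c)
    {t : ℝ} (ht : 0 ≤ t) :
    (1 + t) ^ #{x | f x ≤ c} ≤ ∏ x, (1 + t / θ ^ c * θ ^ f x) := by
  rw [← prod_const, prod_filter]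
  refine prod_le_prod (fun x _ ↦ by split_ifs <;> positivity) fun x _ ↦ ?_
  split_ifs with hx
  · have : θ ^ c ≤ θ ^ f x := pow_le_pow_of_le_one hθ₀ hθ₁ hx
    rw [div_mul_eq_mul_div, mul_div_assoc]
    gcongr
    exact le_mul_of_one_le_right ht ((one_le_div hθc).2 this)
  · exact le_add_of_nonneg_right (by positivity)

-- A Chernoff bound; admitting `θ = 0` when `c = 0` covers the empty bins.
lemma card_filter_lt_card_binLoad_le [DecidableEq ι] (hR : ∀ a ∈ A, {x | R a x}.Subsingleton)
    (hq : ∀ x, q * #A ≤ #{a ∈ A | R a x}) {c : ℕ} (hθ₀ : 0 ≤ θ) (hθ₁ : θ ≤ 1) (hθc : 0 < θ ^ c)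
    {t : ℝ} (ht : 0 ≤ t) (z : ℝ) :
    (#{w ∈ Fintype.piFinset fun _ : ι ↦ A | z < #{x | binLoad R w x ≤ c}} : ℝ) ≤
      Real.exp (Fintype.card β *
          (t / θ ^ c * Real.exp (-((1 - θ) * (q * Fintype.card ι)))) - z * Real.log (1 + t)) *
        #A ^ Fintype.card ι := by
  rw [Real.exp_sub, div_mul_eq_mul_div, le_div_iff₀ (Real.exp_pos _)]
  refine le_trans ?_ (sum_prod_one_add_pow_binLoad_le hR hq hθ₀ hθ₁ (by positivity))
  rw [← nsmul_eq_mul]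
  refine (card_nsmul_le_sum _ (fun w ↦ ∏ x, (1 + t / θ ^ c * θ ^ binLoad R w x)) _ ?_).trans
    (sum_le_sum_of_subset_of_nonneg (filter_subset _ _) fun w _ _ ↦ by positivity)
  intro w hw
  have lt_card : z < #{x | binLoad R w x ≤ c} := (mem_filter.1 hw).2
  calc Real.exp (z * Real.log (1 + t))
      ≤ Real.exp (#{x | binLoad R w x ≤ c} * Real.log (1 + t)) := by
        gcongr
        exact Real.log_nonneg (by linarith)
    _ = (1 + t) ^ #{x | binLoad R w x ≤ c} := by
        rw [Real.exp_nat_mul, Real.exp_log (by positivity)]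
    _ ≤ ∏ x, (1 + t / θ ^ c * θ ^ binLoad R w x) :=
        one_add_pow_card_le_prod _ hθ₀ hθ₁ hθc ht

end Occupancy

section RandomFormula

variable {n k m : ℕ}

/-- The clauses of length `k` that `σ` satisfies. -/
def satClauses (k : ℕ) (σ : Assignment n) : Finset (Clause n k) :=
  {C | ∃ j, litVal σ (C j) = true}

/-- The variable `x` supports the single clause `C` under `σ`. -/
def SupportsClause (σ : Assignment n) (C : Clause n k) (x : Fin n) : Prop :=
  ∃ j, (C j).1 = x ∧ litVal σ (C j) = true ∧ ∀ j', j' ≠ j → litVal σ (C j') = false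

lemma litVal_eq_true_iff {σ : Assignment n} {l : Lit n} : litVal σ l = true ↔ l.2 = σ l.1 := by
  obtain ⟨x, b⟩ := l
  cases b <;> simp [litVal]

lemma card_litVal_eq_false (σ : Assignment n) : #{l | litVal σ l = false} = n := by
  have eq_image : ({l | litVal σ l = false} : Finset (Lit n)) = univ.image fun x ↦ (x, !σ x) := by
    ext ⟨x, b⟩
    cases b <;> simp [litVal]
  rw [eq_image, card_image_of_injective _ fun x y h ↦ congrArg Prod.fst h, card_fin]

lemma supportsClause_subsingleton (σ : Assignment n) (C : Clause n k) :
    {x | SupportsClause σ C x}.Subsingleton := by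
  rintro _ ⟨j, rfl, hj, -⟩ _ ⟨j', rfl, -, hj'⟩
  have : j = j' := by
    by_contra hne
    simp [hj' j hne] at hj
  rw [this]

lemma card_supportsClause (σ : Assignment n) (x : Fin n) :
    #{C : Clause n k | SupportsClause σ C x} = k * n ^ (k - 1) := by
  let supportAt (j : Fin k) : Finset (Clause n k) :=
    Fintype.piFinset (Function.update (fun _ ↦ univ.filter fun l ↦ litVal σ l = false) j {(x, σ x)})
  have mem_supportAt (C : Clause n k) (j : Fin k) :
      C ∈ supportAt j ↔ C j = (x, σ x) ∧ ∀ j', j' ≠ j → litVal σ (C j') = false := by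
    simp [supportAt, Fintype.mem_piFinset,
      Function.forall_update_iff _ fun i (s : Finset (Lit n)) ↦ C i ∈ s]
  have card_supportAt (j : Fin k) : #(supportAt j) = n ^ (k - 1) := by
    rw [Fintype.card_piFinset]
    simp only [Function.apply_update fun _ (s : Finset (Lit n)) ↦ #s]
    rw [prod_update_of_mem (mem_univ j)]
    simp [card_litVal_eq_false, card_sdiff]
  have eq_biUnion : univ.filter (fun C : Clause n k ↦ SupportsClause σ C x) =
      univ.biUnion supportAt := by
    ext C
    simp only [mem_filter_univ, mem_biUnion, mem_univ, true_and, mem_supportAt, SupportsClause,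
      litVal_eq_true_iff, Prod.ext_iff]
    aesop
  rw [eq_biUnion, card_biUnion, sum_congr rfl fun j _ ↦ card_supportAt j]
  · simp
  · intro j _ j' _ hne
    refine disjoint_left.2 fun C hj hj' ↦ ?_
    have lit_true : litVal σ (C j) = true := by
      simp [litVal_eq_true_iff, ((mem_supportAt C j).1 hj).1]
    simp [((mem_supportAt C j').1 hj').2 j hne] at lit_true

lemma filter_supportsClause_satClauses (σ : Assignment n) (x : Fin n) :
    {C ∈ satClauses k σ | SupportsClause σ C x} =
      univ.filter fun C : Clause n k ↦ SupportsClause σ C x := by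
  rw [satClauses, filter_filter]
  exact filter_congr fun C _ ↦ and_iff_right_of_imp fun ⟨j, _, hj, _⟩ ↦ ⟨j, hj⟩

lemma mul_card_satClauses_le (σ : Assignment n) (x : Fin n) :
    (k / (2 ^ k * n) : ℝ) * #(satClauses k σ) ≤ #{C ∈ satClauses k σ | SupportsClause σ C x} := by
  have n_pos : 0 < (n : ℝ) := by exact_mod_cast x.pos
  have card_le : (#(satClauses k σ) : ℝ) ≤ (n * 2) ^ k := by
    have := card_le_univ (satClauses k σ)
    rw [Fintype.card_fun, Fintype.card_prod, Fintype.card_fin, Fintype.card_fin,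
      Fintype.card_bool] at this
    exact_mod_cast this
  rw [filter_supportsClause_satClauses, card_supportsClause]
  calc (k / (2 ^ k * n) : ℝ) * #(satClauses k σ)
      ≤ k / (2 ^ k * n) * (n * 2) ^ k := by gcongr
    _ = (k * n ^ (k - 1) : ℕ) := by
      cases k with
      | zero => simp
      | succ l => push_cast; field_simp; ring

lemma filter_satisfies_eq_piFinset (σ : Assignment n) :
    ({Φ | Satisfies σ Φ} : Finset (Formula n k m)) =
      Fintype.piFinset fun _ ↦ satClauses k σ := by
  ext Φ
  rw [mem_filter_univ, Fintype.mem_piFinset]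
  simp [Satisfies, satClauses]

lemma card_satisfies_and_lt_card_supCount_le (σ : Assignment n) {c : ℕ} {θ t : ℝ} (hθ₀ : 0 ≤ θ)
    (hθ₁ : θ ≤ 1) (hθc : 0 < θ ^ c) (ht : 0 ≤ t) (z : ℝ) :
    (#{Φ : Formula n k m | Satisfies σ Φ ∧ z < #{x | supCount n k m σ Φ x ≤ c}} : ℝ) ≤
      Real.exp (n * (t / θ ^ c * Real.exp (-((1 - θ) * (k / (2 ^ k * n) * m)))) -
          z * Real.log (1 + t)) *
        #{Φ : Formula n k m | Satisfies σ Φ} := by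
  have tail := card_filter_lt_card_binLoad_le (ι := Fin m)
    (fun C _ ↦ supportsClause_subsingleton σ C) (mul_card_satClauses_le (k := k) σ)
    hθ₀ hθ₁ hθc ht z
  have event_eq : ({Φ | Satisfies σ Φ ∧ z < #{x | supCount n k m σ Φ x ≤ c}} :
      Finset (Formula n k m)) = {Φ ∈ Fintype.piFinset fun _ : Fin m ↦ satClauses k σ |
        z < #{x | binLoad (SupportsClause σ) Φ x ≤ c}} := by
    ext Φ
    rw [← filter_satisfies_eq_piFinset, filter_filter, mem_filter_univ, mem_filter_univ]
    rfl
  rw [event_eq, filter_satisfies_eq_piFinset, Fintype.card_piFinset_const]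
  simpa only [Fintype.card_fin, Nat.cast_pow] using tail

lemma expF_card_filter_and_le_mul {P : Assignment n → Formula n k m → Prop} {B : ℝ}
    (h : ∀ σ, (#{Φ | Satisfies σ Φ ∧ P σ Φ} : ℝ) ≤ B * #{Φ : Formula n k m | Satisfies σ Φ}) :
    expF n k m (fun Φ ↦ (#{σ | Satisfies σ Φ ∧ P σ Φ} : ℝ)) ≤
      B * expF n k m fun Φ ↦ (satCount n k m Φ : ℝ) := by
  have sum_card_comm (Q : Assignment n → Formula n k m → Prop) [DecidableRel Q] :
      ∑ Φ, (#{σ | Q σ Φ} : ℝ) = ∑ σ, (#{Φ | Q σ Φ} : ℝ) := by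
    exact_mod_cast (sum_card_bipartiteAbove_eq_sum_card_bipartiteBelow Q).symm
  simp only [expF, satCount, satSet]
  rw [← mul_div_assoc, sum_card_comm fun σ Φ ↦ Satisfies σ Φ ∧ P σ Φ, sum_card_comm, mul_sum]
  gcongr with σ
  exact h σ

lemma expF_lt_card_supCount_le {mean : ℝ} (hmean : mean * n ≤ k * m / 2 ^ k) {c : ℕ} {θ t : ℝ}
    (hθ₀ : 0 ≤ θ) (hθ₁ : θ ≤ 1) (hθc : 0 < θ ^ c) (ht : 0 ≤ t) (ζ : ℝ) :
    expF n k m (fun Φ ↦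
        (#{σ | Satisfies σ Φ ∧ ζ * n < (#{x | supCount n k m σ Φ x ≤ c} : ℝ)} : ℝ)) ≤
      Real.exp (n * (t / θ ^ c * Real.exp (-((1 - θ) * mean)) - ζ * Real.log (1 + t))) *
        expF n k m fun Φ ↦ (satCount n k m Φ : ℝ) := by
  refine expF_card_filter_and_le_mul fun σ ↦
    (card_satisfies_and_lt_card_supCount_le σ hθ₀ hθ₁ hθc ht (ζ * n)).trans ?_
  rw [mul_sub, ← mul_assoc (n : ℝ) ζ, mul_comm (n : ℝ) ζ]
  rcases n.eq_zero_or_pos with rfl | hn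
  · simp
  have mean_le : mean ≤ k / (2 ^ k * n) * m := by
    rw [div_mul_eq_mul_div, ← div_div, le_div_iff₀ (by exact_mod_cast hn)]
    exact hmean
  gcongr

end RandomFormula

section Estimates

variable {k : ℕ}

/-- A lower bound, for `m ≥ (2 ^ k * log 2 - 3) * n`, for the mean number `k * m / (2 ^ k * n)` of
clauses that a given variable supports. -/
def meanSupport (k : ℕ) : ℝ := k * Real.log 2 - 3 * k / 2 ^ k

lemma meanSupport_mul_le {n m : ℕ} (hm : (2 ^ k * Real.log 2 - 3) * n ≤ m) :
    meanSupport k * n ≤ k * m / 2 ^ k := by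
  calc meanSupport k * n = k * ((2 ^ k * Real.log 2 - 3) * n) / 2 ^ k := by
        rw [meanSupport]
        field_simp
    _ ≤ k * m / 2 ^ k := by gcongr

lemma mul_pow_three_le_two_pow (hk : 17 ≤ k) : 24 * k ^ 3 ≤ 2 ^ k := by
  induction k, hk using Nat.le_induction with
  | base => norm_num
  | succ k hk ih =>
    have : (k + 1) ^ 3 ≤ 2 * k ^ 3 := by nlinarith [Nat.mul_le_mul hk hk]
    rw [pow_succ 2]
    linarith

lemma three_mul_div_two_pow_le (hk : 17 ≤ k) : (3 * k / 2 ^ k : ℝ) ≤ 1 / (k : ℝ) ^ 2 / 8 := by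
  have : 0 < k := by omega
  have : (24 * k ^ 3 : ℝ) ≤ 2 ^ k := by exact_mod_cast mul_pow_three_le_two_pow hk
  rw [div_div, div_le_div_iff₀ (by positivity) (by positivity)]
  linarith

lemma one_div_sq_le (hk : 17 ≤ k) : 1 / (k : ℝ) ^ 2 ≤ 1 / 289 := by
  have : (17 : ℝ) ≤ k := by exact_mod_cast hk
  gcongr
  nlinarith

lemma exp_neg_meanSupport_le (hk : 17 ≤ k) :
    Real.exp (-meanSupport k) ≤ (1 + 1 / (k : ℝ) ^ 2 / 4) / 2 ^ k := by
  set y : ℝ := 3 * k / 2 ^ k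
  have hy₀ : 0 ≤ y := by positivity
  have hy_le := three_mul_div_two_pow_le hk
  have exp_le : Real.exp y ≤ 1 + 2 * y := by
    have := (abs_le.1 (Real.abs_exp_sub_one_le (x := y)
      (abs_le.2 ⟨by linarith, by linarith [one_div_sq_le hk]⟩))).2
    rw [abs_of_nonneg hy₀] at this
    linarith
  calc Real.exp (-meanSupport k) = Real.exp y / 2 ^ k := by
        rw [meanSupport, neg_sub, Real.exp_sub, Real.exp_nat_mul, Real.exp_log two_pos]
    _ ≤ (1 + 1 / (k : ℝ) ^ 2 / 4) / 2 ^ k := by gcongr; linarith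

lemma exp_neg_one_sub_mul_meanSupport_le (hk : 17 ≤ k) :
    Real.exp (-((1 - 12 / k) * meanSupport k)) ≤ 2 ^ 13 / 2 ^ k := by
  have : 0 < k := by omega
  have mul_le : 12 / k * meanSupport k ≤ (12 : ℕ) * Real.log 2 := by
    calc 12 / k * meanSupport k = 12 * Real.log 2 - 36 / 2 ^ k := by
          rw [meanSupport]
          field_simp
          ring
      _ ≤ (12 : ℕ) * Real.log 2 := sub_le_self _ (by positivity)
  calc Real.exp (-((1 - 12 / k) * meanSupport k))
      ≤ Real.exp ((12 : ℕ) * Real.log 2 + -meanSupport k) := by gcongr; linarith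
    _ = 2 ^ 12 * Real.exp (-meanSupport k) := by
        rw [Real.exp_add, Real.exp_nat_mul, Real.exp_log two_pos]
    _ ≤ 2 ^ 12 * (2 / 2 ^ k) := by
        gcongr
        refine (exp_neg_meanSupport_le hk).trans ?_
        gcongr
        linarith [one_div_sq_le hk]
    _ = 2 ^ 13 / 2 ^ k := by ring

lemma chernoff_exponent_load_le_twelve (hk : 17 ≤ k) :
    1 / (12 / k : ℝ) ^ 12 * Real.exp (-((1 - 12 / k) * meanSupport k)) -
      (k : ℝ) ^ 12 * ((2 : ℝ) ^ k)⁻¹ * Real.log (1 + 1) ≤ -((k : ℝ) ^ 9 / 2 ^ k) := by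
  have hk_le : (17 : ℝ) ≤ k := by exact_mod_cast hk
  have log_ge : 1 / 2 ≤ Real.log (1 + 1) := by
    rw [one_add_one_eq_two]
    linarith [Real.log_two_gt_d9]
  have pow_le : (k : ℝ) ^ 9 ≤ k ^ 12 / 4 := by
    have : 4 ≤ (k : ℝ) ^ 3 := by nlinarith [pow_le_pow_left₀ (by norm_num) hk_le 3]
    nlinarith [pow_pos (show (0 : ℝ) < k by linarith) 9]
  calc 1 / (12 / k : ℝ) ^ 12 * Real.exp (-((1 - 12 / k) * meanSupport k)) -
        (k : ℝ) ^ 12 * ((2 : ℝ) ^ k)⁻¹ * Real.log (1 + 1)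
      ≤ 1 / (12 / k : ℝ) ^ 12 * (2 ^ 13 / 2 ^ k) - (k : ℝ) ^ 12 * ((2 : ℝ) ^ k)⁻¹ * (1 / 2) := by
        gcongr
        exact exp_neg_one_sub_mul_meanSupport_le hk
    _ = -((1 / 2 - 2 ^ 13 / 12 ^ 12) * ((k : ℝ) ^ 12 / 2 ^ k)) := by
        field_simp
        ring
    _ ≤ -(1 / 4 * ((k : ℝ) ^ 12 / 2 ^ k)) := by gcongr; norm_num
    _ = -((k : ℝ) ^ 12 / 4 / 2 ^ k) := by ring
    _ ≤ -((k : ℝ) ^ 9 / 2 ^ k) := by gcongr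

lemma mul_one_add_sub_mul_log_le {ε : ℝ} (hε₀ : 0 ≤ ε) (hε : ε ≤ 1 / 9) :
    ε * (1 + ε / 4) - (1 + ε) * Real.log (1 + ε) ≤ -ε ^ 3 := by
  have log_ge := Real.le_log_one_add_of_nonneg hε₀
  have : (1 + ε) * (2 * ε / (ε + 2)) ≥ ε * (1 + ε / 4) + ε ^ 3 := by
    rw [mul_div_assoc', ge_iff_le, le_div_iff₀ (by positivity)]
    nlinarith [pow_nonneg hε₀ 2, pow_nonneg hε₀ 3]
  linarith [mul_le_mul_of_nonneg_left log_ge (by positivity : 0 ≤ 1 + ε)]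

lemma chernoff_exponent_load_eq_zero (hk : 17 ≤ k) :
    1 / (k : ℝ) ^ 2 * Real.exp (-meanSupport k) -
      (1 + 1 / (k : ℝ) ^ 2) * ((2 : ℝ) ^ k)⁻¹ * Real.log (1 + 1 / (k : ℝ) ^ 2) ≤
        -(1 / ((k : ℝ) ^ 6 * 2 ^ k)) := by
  set ε : ℝ := 1 / (k : ℝ) ^ 2 with hε
  calc ε * Real.exp (-meanSupport k) - (1 + ε) * ((2 : ℝ) ^ k)⁻¹ * Real.log (1 + ε)
      ≤ ε * ((1 + ε / 4) / 2 ^ k) - (1 + ε) * ((2 : ℝ) ^ k)⁻¹ * Real.log (1 + ε) := by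
        gcongr
        exact exp_neg_meanSupport_le hk
    _ = (ε * (1 + ε / 4) - (1 + ε) * Real.log (1 + ε)) / 2 ^ k := by ring
    _ ≤ -ε ^ 3 / 2 ^ k := by
        gcongr
        exact mul_one_add_sub_mul_log_le (by positivity) (by linarith [one_div_sq_le hk])
    _ = -(1 / ((k : ℝ) ^ 6 * 2 ^ k)) := by
        rw [hε]
        field_simp

lemma sub_three_mul_le_floor {a ρ : ℝ} (hρ : ρ ≤ 2) {n : ℕ} (hn : 1 ≤ n) :
    (a - 3) * n ≤ ⌊(a - ρ) * n⌋₊ := by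
  have hn' : (1 : ℝ) ≤ n := by exact_mod_cast hn
  nlinarith [Nat.lt_floor_add_one ((a - ρ) * n)]

end Estimates

theorem statement11_general {k n m : ℕ} (hk : 17 ≤ k) (hm : (2 ^ k * Real.log 2 - 3) * n ≤ m) :
    expF n k m (fun Φ ↦ (#{σ | Satisfies σ Φ ∧
        (k : ℝ) ^ 12 * ((2 : ℝ) ^ k)⁻¹ * n < (#{x | supCount n k m σ Φ x ≤ 12} : ℝ)} : ℝ)) ≤
      Real.exp (-(n : ℝ) * (k : ℝ) ^ 9 / 2 ^ k) * expF n k m (fun Φ ↦ (satCount n k m Φ : ℝ)) ∧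
    expF n k m (fun Φ ↦ (#{σ | Satisfies σ Φ ∧
        (1 + 1 / (k : ℝ) ^ 2) * ((2 : ℝ) ^ k)⁻¹ * n <
          (#{x | supCount n k m σ Φ x = 0} : ℝ)} : ℝ)) ≤
      Real.exp (-(n : ℝ) / ((k : ℝ) ^ 6 * 2 ^ k)) *
        expF n k m (fun Φ ↦ (satCount n k m Φ : ℝ)) := by
  have hk_le : (17 : ℝ) ≤ k := by exact_mod_cast hk
  have expF_nonneg : 0 ≤ expF n k m fun Φ ↦ (satCount n k m Φ : ℝ) := by
    unfold expF
    positivity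
  constructor
  · have hθ₁ : 12 / (k : ℝ) ≤ 1 := (div_le_one (by linarith)).2 (by linarith)
    have exponent_eq : -(n : ℝ) * k ^ 9 / 2 ^ k = n * -((k : ℝ) ^ 9 / 2 ^ k) := by ring
    rw [exponent_eq]
    exact (expF_lt_card_supCount_le (meanSupport_mul_le hm) (by positivity) hθ₁ (by positivity)
      zero_le_one _).trans (by gcongr; exact chernoff_exponent_load_le_twelve hk)
  · have exponent_eq : -(n : ℝ) / (k ^ 6 * 2 ^ k) = n * -(1 / ((k : ℝ) ^ 6 * 2 ^ k)) := by ring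
    simp only [exponent_eq, ← Nat.le_zero]
    refine (expF_lt_card_supCount_le (meanSupport_mul_le hm) le_rfl zero_le_one (by simp)
      (t := 1 / (k : ℝ) ^ 2) (by positivity) _).trans ?_
    gcongr
    simpa only [pow_zero, div_one, sub_zero, one_mul] using chernoff_exponent_load_eq_zero hk

/-- For `k ≥ k0`, `r = 2^k ln 2 - ρ` with `0 < ρ ≤ 2`, and all large `n`:
(1) the expected number of satisfying assignments under which more than `k^12 2^{-k} n`
variables support at most 12 clauses is at most `exp(-n k^9/2^k) E[|S(Φ)|]`;
(2) the expected number of satisfying assignments under which more than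
`(1 + 1/k²) 2^{-k} n` variables support no clause is at most `exp(-n/(k^6 2^k)) E[|S(Φ)|]`. -/
theorem statement11 :
    ∃ k0 : ℕ, ∀ k : ℕ, k0 ≤ k → ∀ rho : ℝ, 0 < rho → rho ≤ 2 →
      ∃ N : ℕ, ∀ n : ℕ, N ≤ n →
        let m := ⌊(2 ^ k * Real.log 2 - rho) * (n : ℝ)⌋₊
        (expF n k m (fun Φ =>
              ((univ.filter fun σ : Assignment n =>
                  Satisfies σ Φ ∧
                    (k : ℝ) ^ 12 * ((2 : ℝ) ^ k)⁻¹ * n <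
                      ((univ.filter fun x : Fin n =>
                          supCount n k m σ Φ x ≤ 12).card : ℝ)).card : ℝ)) ≤
            Real.exp (-(n : ℝ) * (k : ℝ) ^ 9 / 2 ^ k) *
              expF n k m fun Φ => (satCount n k m Φ : ℝ)) ∧
        (expF n k m (fun Φ =>
              ((univ.filter fun σ : Assignment n =>
                  Satisfies σ Φ ∧
                    (1 + 1 / (k : ℝ) ^ 2) * ((2 : ℝ) ^ k)⁻¹ * n <
                      ((univ.filter fun x : Fin n =>
                          supCount n k m σ Φ x = 0).card : ℝ)).card : ℝ)) ≤
            Real.exp (-(n : ℝ) / ((k : ℝ) ^ 6 * 2 ^ k)) *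
              expF n k m fun Φ => (satCount n k m Φ : ℝ)) :=
  ⟨17, fun _ hk _ _ hρ ↦ ⟨1, fun _ hn ↦ statement11_general hk (sub_three_mul_le_floor hρ hn)⟩⟩
end
end

section
/- There exist an integer k0 and constants C, c > 0 such that for every k >= k0 and every vector ell = (ell_1,...,ell_k) in (0,1)^k with |ell_j - 1/2| <= 10 * sqrt(k * ln k) * 2^{-k/2} for all j, there exists a vector q = (q_1,...,q_k) in (0,1)^k satisfying q_j / (1 - prod_{l=1}^k (1 - q_l)) = ell_j for every j in {1,...,k}, and moreover |q_j - (ell_j - 2^{-k-1})| <= C * k^c * 2^{-3k/2} for every j. -/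
/-!
If `t = ∏ (1 - q_l)` is the probability that every coordinate vanishes, the equations
`q_j / (1 - t) = ℓ_j` say that `q = (1 - t) ℓ`, so all `k` of them reduce to the single equation
`t = ∏ (1 - (1 - t) ℓ_l)`. When every `ℓ_l` is within `ε` of `1/2`, each factor is `1/2` up to a
relative error `2ε + t`, so for small `t` the right-hand side is `2⁻ᵏ (1 + O(k (ε + t)))`. If
`k (ε + 2⁻ᵏ)` is small, it therefore maps `[0, 2 · 2⁻ᵏ]` to itself, and by the intermediate value
theorem a fixed point `t = 2⁻ᵏ (1 + O(k (ε + 2⁻ᵏ)))` exists.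
Then `q_j = (1 - t) ℓ_j` is `ℓ_j - 2⁻ᵏ / 2` to first order because `ℓ_j` is close to `1/2`.
-/

open Filter Set Topology

section Perturbation

theorem norm_prod_one_add_sub_one_le_of_norm_le {ι R : Type*} [NormedCommRing R]
    [NormOneClass R] (s : Finset ι) {x : ι → R} {δ : ℝ} (hx : ∀ j ∈ s, ‖x j‖ ≤ δ)
    (hδ : s.card * δ ≤ 1) :
    ‖∏ j ∈ s, (1 + x j) - 1‖ ≤ 2 * (s.card * δ) := by
  have hsum : ∑ j ∈ s, ‖x j‖ ≤ s.card * δ := by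
    simpa only [nsmul_eq_mul] using Finset.sum_le_card_nsmul s _ δ hx
  have hsum_nonneg : 0 ≤ ∑ j ∈ s, ‖x j‖ := Finset.sum_nonneg fun j _ => norm_nonneg _
  have hexp := Real.abs_exp_sub_one_le (x := ∑ j ∈ s, ‖x j‖)
    (by rw [abs_of_nonneg hsum_nonneg]; exact hsum.trans hδ)
  calc ‖∏ j ∈ s, (1 + x j) - 1‖
      ≤ Real.exp (∑ j ∈ s, ‖x j‖) - 1 := s.norm_prod_one_add_sub_one_le x
    _ ≤ 2 * ∑ j ∈ s, ‖x j‖ := by simpa only [abs_of_nonneg hsum_nonneg] using le_of_abs_le hexp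
    _ ≤ 2 * (s.card * δ) := by gcongr

theorem abs_one_sub_two_mul_le {x t ε : ℝ} (hx : |x - 1 / 2| ≤ ε) (ht : t ∈ Icc (0 : ℝ) 1) :
    |1 - 2 * ((1 - t) * x)| ≤ 2 * ε + t := by
  obtain ⟨ht0, ht1⟩ := ht
  calc |1 - 2 * ((1 - t) * x)|
      = |t - 2 * (1 - t) * (x - 1 / 2)| := by ring_nf
    _ ≤ |t| + |2 * (1 - t) * (x - 1 / 2)| := abs_sub _ _
    _ = t + 2 * (1 - t) * |x - 1 / 2| := by
      rw [abs_mul, abs_of_nonneg ht0, abs_of_nonneg (by linarith : 0 ≤ 2 * (1 - t))]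
    _ ≤ t + 2 * 1 * ε := by gcongr; linarith
    _ = 2 * ε + t := by ring

theorem abs_one_sub_mul_sub_le {x t p ε η : ℝ} (hp : 0 ≤ p) (hx : |x - 1 / 2| ≤ ε)
    (hx1 : |x| ≤ 1) (ht : |t - p| ≤ p * η) :
    |(1 - t) * x - (x - p / 2)| ≤ p * (η + ε) :=
  calc |(1 - t) * x - (x - p / 2)|
      = |(t - p) * x + p * (x - 1 / 2)| := by rw [← abs_neg]; ring_nf
    _ ≤ |t - p| * |x| + p * |x - 1 / 2| := by
      simpa only [abs_mul, abs_of_nonneg hp] using abs_add_le ((t - p) * x) (p * (x - 1 / 2))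
    _ ≤ p * η * 1 + p * ε := by gcongr; exact (abs_nonneg _).trans ht
    _ = p * (η + ε) := by ring

end Perturbation

section FixedPoint

variable {ι : Type*} [Fintype ι]

/-- The probability that independent Bernoulli variables with success probabilities
`(1 - t) * ℓ j` all vanish. Its fixed points `t ≠ 1` correspond to the vectors with conditional
marginals `ℓ`. -/
def vanishingProb (ℓ : ι → ℝ) (t : ℝ) : ℝ :=
  ∏ j, (1 - (1 - t) * ℓ j)

theorem continuous_vanishingProb (ℓ : ι → ℝ) : Continuous (vanishingProb ℓ) := by
  unfold vanishingProb
  fun_prop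

theorem vanishingProb_eq_half_pow_mul_prod (ℓ : ι → ℝ) (t : ℝ) :
    vanishingProb ℓ t =
      (1 / 2) ^ Fintype.card ι * ∏ j, (1 + (1 - 2 * ((1 - t) * ℓ j))) := by
  rw [vanishingProb, ← Finset.card_univ, ← Finset.prod_const, ← Finset.prod_mul_distrib]
  exact Finset.prod_congr rfl fun j _ => by ring

theorem mul_div_one_sub_prod_of_isFixedPt_vanishingProb {ℓ : ι → ℝ} {t : ℝ}
    (ht : Function.IsFixedPt (vanishingProb ℓ) t) (ht1 : t ≠ 1) (j : ι) :
    (1 - t) * ℓ j / (1 - ∏ l, (1 - (1 - t) * ℓ l)) = ℓ j := by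
  rw [show ∏ l, (1 - (1 - t) * ℓ l) = t from ht, mul_div_cancel_left₀ _ (sub_ne_zero.2 ht1.symm)]

theorem abs_vanishingProb_sub_half_pow_le {ℓ : ι → ℝ} {t ε : ℝ} (hℓ : ∀ j, |ℓ j - 1 / 2| ≤ ε)
    (ht : t ∈ Icc (0 : ℝ) 1) (hsmall : Fintype.card ι * (2 * ε + t) ≤ 1) :
    |vanishingProb ℓ t - (1 / 2) ^ Fintype.card ι| ≤
      (1 / 2) ^ Fintype.card ι * (2 * (Fintype.card ι * (2 * ε + t))) := by
  have hprod := norm_prod_one_add_sub_one_le_of_norm_le Finset.univ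
    (x := fun j => 1 - 2 * ((1 - t) * ℓ j)) (fun j _ => abs_one_sub_two_mul_le (hℓ j) ht) hsmall
  rw [vanishingProb_eq_half_pow_mul_prod, ← mul_sub_one, abs_mul, abs_of_pos (by positivity)]
  gcongr
  exact hprod

variable [Nonempty ι] {ℓ : ι → ℝ} {ε : ℝ}

theorem exists_isFixedPt_vanishingProb (hℓ : ∀ j, |ℓ j - 1 / 2| ≤ ε)
    (hsmall : 4 * (Fintype.card ι * (ε + (1 / 2) ^ Fintype.card ι)) ≤ 1) :
    ∃ t ∈ Icc (0 : ℝ) (1 / 2), Function.IsFixedPt (vanishingProb ℓ) t ∧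
      |t - (1 / 2) ^ Fintype.card ι| ≤
        (1 / 2) ^ Fintype.card ι * (4 * (Fintype.card ι * (ε + (1 / 2) ^ Fintype.card ι))) := by
  have hcard : (1 : ℝ) ≤ Fintype.card ι := mod_cast Fintype.card_pos
  have hε : 0 ≤ ε := (abs_nonneg _).trans (hℓ (Classical.arbitrary ι))
  set p : ℝ := (1 / 2) ^ Fintype.card ι
  have hp : 0 < p := by positivity
  have hle : ε + p ≤ Fintype.card ι * (ε + p) :=
    le_mul_of_one_le_left (by positivity) hcard
  have hdev : ∀ t ∈ Icc 0 (2 * p),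
      |vanishingProb ℓ t - p| ≤ p * (4 * (Fintype.card ι * (ε + p))) := by
    rintro t ⟨ht0, ht⟩
    have hδ : Fintype.card ι * (2 * ε + t) ≤ 2 * (Fintype.card ι * (ε + p)) :=
      calc Fintype.card ι * (2 * ε + t) ≤ Fintype.card ι * (2 * ε + 2 * p) := by gcongr
        _ = 2 * (Fintype.card ι * (ε + p)) := by ring
    calc |vanishingProb ℓ t - p|
        ≤ p * (2 * (Fintype.card ι * (2 * ε + t))) :=
          abs_vanishingProb_sub_half_pow_le hℓ ⟨ht0, by linarith⟩ (by linarith)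
      _ ≤ p * (4 * (Fintype.card ι * (ε + p))) := by
        refine mul_le_mul_of_nonneg_left ?_ hp.le
        linarith
  have hmaps : MapsTo (vanishingProb ℓ) (Icc 0 (2 * p)) (Icc 0 (2 * p)) := by
    intro t ht
    have := abs_le.1 ((hdev t ht).trans (mul_le_of_le_one_right hp.le hsmall))
    constructor <;> linarith
  obtain ⟨t, ht, hfix⟩ := exists_mem_Icc_isFixedPt_of_mapsTo
    (continuous_vanishingProb ℓ).continuousOn (by positivity) hmaps
  refine ⟨t, ⟨ht.1, by linarith [ht.2]⟩, hfix, ?_⟩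
  simpa only [hfix.eq] using hdev t ht

theorem exists_conditional_marginals_eq (hℓ : ∀ j, |ℓ j - 1 / 2| ≤ ε)
    (hsmall : 4 * (Fintype.card ι * (ε + (1 / 2) ^ Fintype.card ι)) ≤ 1) :
    ∃ q : ι → ℝ, (∀ j, 0 < q j ∧ q j < 1) ∧ (∀ j, q j / (1 - ∏ l, (1 - q l)) = ℓ j) ∧
      ∀ j, |q j - (ℓ j - (1 / 2) ^ Fintype.card ι / 2)| ≤
        (1 / 2) ^ Fintype.card ι * (5 * (Fintype.card ι * (ε + (1 / 2) ^ Fintype.card ι))) := by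
  have hcard : (1 : ℝ) ≤ Fintype.card ι := mod_cast Fintype.card_pos
  have hε : 0 ≤ ε := (abs_nonneg _).trans (hℓ (Classical.arbitrary ι))
  obtain ⟨t, ⟨ht0, ht1⟩, hfix, ht⟩ := exists_isFixedPt_vanishingProb hℓ hsmall
  set p : ℝ := (1 / 2) ^ Fintype.card ι
  have hp : 0 < p := by positivity
  have hle : ε + p ≤ Fintype.card ι * (ε + p) :=
    le_mul_of_one_le_left (by positivity) hcard
  have hℓ_mem : ∀ j, 0 < ℓ j ∧ ℓ j < 1 := fun j => by
    have := abs_le.1 (hℓ j)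
    constructor <;> linarith
  refine ⟨fun j => (1 - t) * ℓ j, fun j => ⟨?_, ?_⟩,
    mul_div_one_sub_prod_of_isFixedPt_vanishingProb hfix (by linarith), fun j => ?_⟩
  · exact mul_pos (by linarith) (hℓ_mem j).1
  · exact mul_lt_one_of_nonneg_of_lt_one_right (by linarith) (hℓ_mem j).1.le (hℓ_mem j).2
  · have hℓ_abs : |ℓ j| ≤ 1 := by rw [abs_of_pos (hℓ_mem j).1]; exact (hℓ_mem j).2.le
    refine (abs_one_sub_mul_sub_le hp.le (hℓ j) hℓ_abs ht).trans ?_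
    gcongr
    linarith

end FixedPoint

section Asymptotics

theorem tendsto_natCast_rpow_mul_two_rpow_neg_half (s : ℝ) :
    Tendsto (fun k : ℕ => (k : ℝ) ^ s * (2 : ℝ) ^ (-(k : ℝ) / 2)) atTop (𝓝 0) := by
  have h := (tendsto_rpow_mul_exp_neg_mul_atTop_nhds_zero s (Real.log 2 / 2)
    (by positivity)).comp tendsto_natCast_atTop_atTop
  refine h.congr fun k => ?_
  rw [Function.comp_apply, Real.rpow_def_of_pos two_pos]
  ring_nf

theorem two_rpow_neg_half_sq (k : ℕ) : ((2 : ℝ) ^ (-(k : ℝ) / 2)) ^ 2 = (1 / 2) ^ k := by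
  rw [← Real.rpow_mul_natCast two_pos.le, Nat.cast_ofNat, div_mul_cancel₀ _ two_ne_zero,
    Real.rpow_neg two_pos.le, Real.rpow_natCast, one_div, inv_pow]

theorem two_rpow_neg_three_mul_half (k : ℕ) :
    (2 : ℝ) ^ (-(3 * (k : ℝ)) / 2) = (1 / 2) ^ k * (2 : ℝ) ^ (-(k : ℝ) / 2) := by
  rw [← two_rpow_neg_half_sq, ← pow_succ, ← Real.rpow_mul_natCast two_pos.le]
  congr 1
  push_cast
  ring

theorem two_zpow_neg_sub_one (k : ℕ) : (2 : ℝ) ^ (-(k : ℤ) - 1) = (1 / 2) ^ k / 2 := by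
  rw [zpow_sub_one₀ two_ne_zero, zpow_neg, zpow_natCast, one_div, inv_pow, div_eq_mul_inv]

theorem half_pow_le_two_rpow_neg_half (k : ℕ) : (1 / 2 : ℝ) ^ k ≤ (2 : ℝ) ^ (-(k : ℝ) / 2) := by
  rw [← two_rpow_neg_half_sq]
  refine pow_le_of_le_one (by positivity) ?_ two_ne_zero
  exact Real.rpow_le_one_of_one_le_of_nonpos one_le_two (by linarith [k.cast_nonneg (α := ℝ)])

theorem mul_add_half_pow_le {k : ℕ} (hk : 0 < k) (A : ℝ) {a : ℝ} (ha : 0 ≤ a) :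
    k * (A * (k : ℝ) ^ a * (2 : ℝ) ^ (-(k : ℝ) / 2) + (1 / 2) ^ k) ≤
      (A + 1) * ((k : ℝ) ^ (a + 1) * (2 : ℝ) ^ (-(k : ℝ) / 2)) := by
  have hk1 : (1 : ℝ) ≤ k := mod_cast hk
  have hhalf : (1 / 2 : ℝ) ^ k ≤ (k : ℝ) ^ a * (2 : ℝ) ^ (-(k : ℝ) / 2) :=
    (half_pow_le_two_rpow_neg_half k).trans
      (le_mul_of_one_le_left (by positivity) (Real.one_le_rpow hk1 ha))
  calc k * (A * (k : ℝ) ^ a * (2 : ℝ) ^ (-(k : ℝ) / 2) + (1 / 2) ^ k)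
      ≤ k * (A * (k : ℝ) ^ a * (2 : ℝ) ^ (-(k : ℝ) / 2)
          + (k : ℝ) ^ a * (2 : ℝ) ^ (-(k : ℝ) / 2)) := by gcongr
    _ = (A + 1) * ((k : ℝ) ^ (a + 1) * (2 : ℝ) ^ (-(k : ℝ) / 2)) := by
      rw [Real.rpow_add_one (by positivity)]
      ring

theorem sqrt_mul_log_le_self {x : ℝ} (hx : 0 ≤ x) : √(x * Real.log x) ≤ x :=
  Real.sqrt_le_iff.2 ⟨hx, by rw [sq]; gcongr; exact Real.log_le_self hx⟩

end Asymptotics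

theorem statement13_general {A a : ℝ} (hA : 0 ≤ A) (ha : 0 ≤ a) :
    ∃ (k0 : ℕ) (C : ℝ), 0 < C ∧
      ∀ (ι : Type*) [Fintype ι], k0 ≤ Fintype.card ι →
        ∀ ℓ : ι → ℝ,
          (∀ j, |ℓ j - 1 / 2| ≤
            A * (Fintype.card ι : ℝ) ^ a * (2 : ℝ) ^ (-(Fintype.card ι : ℝ) / 2)) →
          ∃ q : ι → ℝ, (∀ j, 0 < q j ∧ q j < 1) ∧
            (∀ j, q j / (1 - ∏ l, (1 - q l)) = ℓ j) ∧
            ∀ j, |q j - (ℓ j - (2 : ℝ) ^ (-(Fintype.card ι : ℤ) - 1))| ≤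
              C * (Fintype.card ι : ℝ) ^ (a + 1) *
                (2 : ℝ) ^ (-(3 * (Fintype.card ι : ℝ)) / 2) := by
  have hlim := (tendsto_natCast_rpow_mul_two_rpow_neg_half (a + 1)).const_mul (4 * (A + 1))
  rw [mul_zero] at hlim
  obtain ⟨k0, hk0⟩ := eventually_atTop.1
    ((hlim.eventually_le_const one_pos).and (eventually_gt_atTop 0))
  refine ⟨k0, 5 * (A + 1), by positivity, fun ι _ hι ℓ hℓ => ?_⟩
  obtain ⟨hsmall, hpos⟩ := hk0 _ hι
  have : Nonempty ι := Fintype.card_pos_iff.1 hpos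
  have hbound := mul_add_half_pow_le hpos A ha
  obtain ⟨q, hq_mem, hq_eq, hq⟩ := exists_conditional_marginals_eq hℓ (by linarith)
  refine ⟨q, hq_mem, hq_eq, fun j => ?_⟩
  rw [two_zpow_neg_sub_one, two_rpow_neg_three_mul_half]
  calc _ ≤ _ := hq j
    _ ≤ (1 / 2) ^ Fintype.card ι * (5 * ((A + 1) *
          ((Fintype.card ι : ℝ) ^ (a + 1) * (2 : ℝ) ^ (-(Fintype.card ι : ℝ) / 2)))) := by gcongr
    _ = _ := by ring

/-- For every large `k` and every `ℓ ∈ (0,1)^k` with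
`|ℓ_j - 1/2| ≤ 10 √(k ln k) 2^{-k/2}`, there is `q ∈ (0,1)^k` with
`q_j / (1 - ∏ (1 - q_l)) = ℓ_j` for all `j`, and
`|q_j - (ℓ_j - 2^{-k-1})| ≤ C k^c 2^{-3k/2}`. -/
theorem statement13 :
    ∃ (k0 : ℕ) (C c : ℝ), 0 < C ∧ 0 < c ∧
      ∀ k : ℕ, k0 ≤ k →
        ∀ ℓ : Fin k → ℝ, (∀ j, 0 < ℓ j ∧ ℓ j < 1) →
          (∀ j, |ℓ j - 1 / 2| ≤
            10 * Real.sqrt ((k : ℝ) * Real.log k) * (2 : ℝ) ^ (-(k : ℝ) / 2)) →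
          ∃ q : Fin k → ℝ, (∀ j, 0 < q j ∧ q j < 1) ∧
            (∀ j, q j / (1 - ∏ l, (1 - q l)) = ℓ j) ∧
            ∀ j, |q j - (ℓ j - (2 : ℝ) ^ (-(k : ℤ) - 1))| ≤
              C * (k : ℝ) ^ c * (2 : ℝ) ^ (-(3 * (k : ℝ)) / 2) := by
  obtain ⟨k0, C, hC, h⟩ := statement13_general (A := 10) (a := 1) (by norm_num) zero_le_one
  refine ⟨k0, C, 1 + 1, hC, by norm_num, fun k hk ℓ _ hℓ => ?_⟩
  have h := h (Fin k)
  simp only [Fintype.card_fin, Real.rpow_one] at h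
  refine h hk ℓ fun j => (hℓ j).trans ?_
  gcongr
  exact sqrt_mul_log_le_self k.cast_nonneg
end
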